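/- If X is a Hausdorff continuum with covering dimension at least 2, then the hyperspace C(X) of subcontinua of X (with the Vietoris topology) is not a C-space. -/

import Mathlib

open Set TopologicalSpace FirstOrder

universe u v

/-- `U` is a cover of `X` by open sets. -/
def IsOpenCover {X : Type u} [TopologicalSpace X] (U : Set (Set X)) : Prop :=
  (∀ s ∈ U, IsOpen s) ∧ ⋃₀ U = Set.univ

/-- `V` refines `U`: every member of `V` is contained in some member of `U`. -/
def Refines {X : Type u} (V U : Set (Set X)) : Prop :=
  ∀ v ∈ V, ∃ u ∈ U, v ⊆ u

/-- `X` is a C-space (has property C): every sequence of open covers admits a sequence of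
families of pairwise disjoint open sets, the `i`-th refining the `i`-th cover, whose union
covers `X`. -/
def IsCSpace (X : Type u) [TopologicalSpace X] : Prop :=
  ∀ U : ℕ → Set (Set X), (∀ i, IsOpenCover (U i)) →
    ∃ V : ℕ → Set (Set X),
      (∀ i, (∀ s ∈ V i, IsOpen s) ∧ (V i).PairwiseDisjoint id ∧ Refines (V i) (U i)) ∧
      (⋃ i, ⋃₀ (V i)) = Set.univ

/-- `X` is an `m`-C-space: property C restricted to `m`-element open covers. -/
def IsMCSpace (m : ℕ) (X : Type u) [TopologicalSpace X] : Prop :=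
  ∀ U : ℕ → Fin m → Set X, (∀ i j, IsOpen (U i j)) → (∀ i, (⋃ j, U i j) = Set.univ) →
    ∃ V : ℕ → Set (Set X),
      (∀ i, (∀ s ∈ V i, IsOpen s) ∧ (V i).PairwiseDisjoint id ∧ ∀ v ∈ V i, ∃ j, v ⊆ U i j) ∧
      (⋃ i, ⋃₀ (V i)) = Set.univ

/-- Covering dimension at most `n`: every finite open cover has a finite open refinement
of order at most `n + 1`. -/
def CovDimLE (X : Type u) [TopologicalSpace X] (n : ℕ) : Prop :=
  ∀ U : Set (Set X), U.Finite → IsOpenCover U →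
    ∃ V : Set (Set X), V.Finite ∧ IsOpenCover V ∧ Refines V U ∧
      ∀ x : X, {v ∈ V | x ∈ v}.ncard ≤ n + 1

/-- The covering dimension, as an extended natural number (`⊤` if infinite dimensional). -/
noncomputable def covDim (X : Type u) [TopologicalSpace X] : ℕ∞ :=
  sInf ((fun n : ℕ => (n : ℕ∞)) '' {n : ℕ | CovDimLE X n})

/-- The hyperspace `C(X)` of subcontinua (nonempty closed connected subsets) of `X`. -/
def Subcontinua (X : Type u) [TopologicalSpace X] : Type u :=
  {A : Set X // IsClosed A ∧ IsConnected A}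

/-- The Vietoris topology on the hyperspace of subcontinua. -/
instance Subcontinua.instTopologicalSpace (X : Type u) [TopologicalSpace X] :
    TopologicalSpace (Subcontinua X) :=
  TopologicalSpace.generateFrom
    ({s | ∃ U : Set X, IsOpen U ∧ s = {A : Subcontinua X | A.1 ⊆ U}} ∪
     {s | ∃ U : Set X, IsOpen U ∧ s = {A : Subcontinua X | (A.1 ∩ U).Nonempty}})

namespace HNC

/-! ### Cochains on lists -/

/-- The coboundary of an integer valued cochain. -/
def cobd {Q : Type*} : (List Q → ℤ) → List Q → ℤ
  | _, [] => 0
  | ω, q :: l => ω l - cobd (fun m => ω (q :: m)) l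

/-- The prism operator. -/
def prism {Q : Type*} (φ ψ : Q → Q) : (List Q → ℤ) → List Q → ℤ
  | _, [] => 0
  | ω, z :: l => ω (φ z :: ψ z :: l.map ψ) - prism φ ψ (fun m => ω (φ z :: m)) l

/-- Multiplication with the coboundary of a function. -/
def jmul {Q : Type*} (χ : Q → ℤ) (ω : List Q → ℤ) : List Q → ℤ
  | [] => 0
  | [_] => 0
  | q0 :: q1 :: l => (χ q1 - χ q0) * ω (q1 :: l)

/-- A function as a cochain. -/
def ecoch {Q : Type*} (h : Q → ℤ) : List Q → ℤ
  | [] => 0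
  | [q] => h q
  | _ :: _ :: _ => 0

section algebra
variable {Q : Type*}

lemma cobd_sub (ω ω' : List Q → ℤ) (l : List Q) :
    cobd (fun l => ω l - ω' l) l = cobd ω l - cobd ω' l := by
  induction l generalizing ω ω' with
  | nil => simp [cobd]
  | cons q l ih => simp only [cobd]; rw [ih]; ring

lemma cobd_smul (a : ℤ) (ω : List Q → ℤ) (l : List Q) :
    cobd (fun l => a * ω l) l = a * cobd ω l := by
  induction l generalizing ω with
  | nil => simp [cobd]
  | cons q l ih => simp only [cobd]; rw [ih]; ring

lemma cobd_zero (l : List Q) : cobd (fun _ => (0:ℤ)) l = 0 := by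
  have := cobd_smul 0 (fun _ : List Q => (0:ℤ)) l
  simpa using this

lemma cobd_sum {ι : Type*} (s : Finset ι) (ω : ι → List Q → ℤ) (l : List Q) :
    cobd (fun l => ∑ i ∈ s, ω i l) l = ∑ i ∈ s, cobd (ω i) l := by
  classical
  induction s using Finset.induction_on with
  | empty => simp [cobd_zero]
  | insert a s ha ih =>
    have h1 := cobd_sub (fun l => ω a l) (fun l => (-1) * ∑ i ∈ s, ω i l) l
    rw [cobd_smul, ih] at h1
    rw [Finset.sum_insert ha]
    have h2 : (fun l => ω a l - (-1) * ∑ i ∈ s, ω i l) = fun l => ∑ i ∈ insert a s, ω i l := by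
      funext l; rw [Finset.sum_insert ha]; ring
    rw [h2] at h1
    rw [h1]; ring

lemma prism_sub (φ ψ : Q → Q) (ω ω' : List Q → ℤ) (l : List Q) :
    prism φ ψ (fun l => ω l - ω' l) l = prism φ ψ ω l - prism φ ψ ω' l := by
  induction l generalizing ω ω' with
  | nil => simp [prism]
  | cons q l ih => simp only [prism]; rw [ih]; ring

lemma cobd_map (ψ : Q → Q) (ω : List Q → ℤ) (l : List Q) :
    cobd (fun l => ω (l.map ψ)) l = cobd ω (l.map ψ) := by
  induction l generalizing ω with
  | nil => simp [cobd]
  | cons q l ih =>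
    simp only [cobd, List.map_cons]; rw [← ih]

lemma prism_identity (φ ψ : Q → Q) (ω : List Q → ℤ) (l : List Q) :
    cobd (prism φ ψ ω) l + prism φ ψ (cobd ω) l = ω (l.map ψ) - ω (l.map φ) := by
  induction l generalizing ω with
  | nil => simp [cobd, prism]
  | cons z l ih =>
    have h1 : cobd (prism φ ψ ω) (z :: l) = prism φ ψ ω l -
        (cobd (fun l' => ω (φ z :: ψ z :: l')) (l.map ψ)
          - cobd (prism φ ψ (fun l' => ω (φ z :: l'))) l) := by
      rw [cobd, ← cobd_map, ← cobd_sub]; rfl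
    have h2 : prism φ ψ (cobd ω) (z :: l) =
        (ω (ψ z :: l.map ψ) - (ω (φ z :: l.map ψ) -
          cobd (fun l' => ω (φ z :: ψ z :: l')) (l.map ψ)))
        - (prism φ ψ ω l - prism φ ψ (cobd (fun l' => ω (φ z :: l'))) l) := by
      rw [prism, ← prism_sub]; rfl
    rw [h1, h2]
    have h3 := ih (fun l' => ω (φ z :: l'))
    simp only [List.map_cons]
    linarith

lemma prism_eq_zero (φ ψ : Q → Q) (ω : List Q → ℤ) (l : List Q)
    (h : ∀ l' : List Q, (∀ q ∈ l', ∃ z ∈ l, q = φ z ∨ q = ψ z) →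
      (∀ z ∈ l, φ z ∈ l' ∨ ψ z ∈ l') → ω l' = 0) : prism φ ψ ω l = 0 := by
  induction l generalizing ω with
  | nil => simp [prism]
  | cons z l ih =>
    simp only [prism]
    rw [h, ih]
    · simp
    · intro l' h1 h2
      apply h
      · intro q hq
        rcases List.mem_cons.1 hq with rfl | hq
        · exact ⟨z, by simp, Or.inl rfl⟩
        · obtain ⟨y, hy, h⟩ := h1 q hq
          exact ⟨y, by simp [hy], h⟩
      · intro y hy
        rcases List.mem_cons.1 hy with rfl | hy
        · simp
        · rcases h2 y hy with h | h <;> simp [h]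
    · intro q hq
      simp only [List.mem_cons, List.mem_map] at hq
      rcases hq with rfl | rfl | ⟨y, hy, rfl⟩
      · exact ⟨z, by simp, Or.inl rfl⟩
      · exact ⟨z, by simp, Or.inr rfl⟩
      · exact ⟨y, by simp [hy], Or.inr rfl⟩
    · intro y hy
      rcases List.mem_cons.1 hy with rfl | hy
      · simp
      · right; simp only [List.mem_cons, List.mem_map]; exact Or.inr (Or.inr ⟨y, hy, rfl⟩)

lemma jmul_nil (χ : Q → ℤ) (ω : List Q → ℤ) : jmul χ ω [] = 0 := rfl

lemma cobd_jmul (χ : Q → ℤ) (ω : List Q → ℤ) (h0 : ω [] = 0) (l : List Q) :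
    cobd (jmul χ ω) l = - jmul χ (cobd ω) l := by
  match l with
  | [] => simp [cobd, jmul]
  | [q] => simp [cobd, jmul]
  | q0 :: q1 :: l =>
    have e : (fun l' => jmul χ ω (q0 :: q1 :: l')) = fun l' => (χ q1 - χ q0) * ω (q1 :: l') := rfl
    simp only [cobd]
    rw [e, cobd_smul]
    simp only [jmul, cobd]
    cases l with
    | nil => simp [h0, cobd]
    | cons q2 l => ring

lemma cobd_ecoch (h : Q → ℤ) (l : List Q) :
    cobd (ecoch h) l = jmul h (ecoch (fun _ => 1)) l := by
  match l with
  | [] => simp [cobd, jmul]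
  | [q] => simp [cobd, jmul, ecoch]
  | [q0, q1] => simp [cobd, jmul, ecoch]
  | q0 :: q1 :: q2 :: l =>
    have e : (fun l' => ecoch h (q0 :: q1 :: l')) = fun _ => 0 := rfl
    simp only [cobd]
    have e1 : (fun l' => ecoch h (q0 :: q1 :: q2 :: l')) = fun _ => 0 := rfl
    rw [e1, cobd_zero]
    simp [jmul, ecoch]

lemma jmul_congr (χ : Q → ℤ) (ω ω' : List Q → ℤ) (l : List Q)
    (h : ∀ l' : List Q, l' ⊆ l → ω l' = ω' l') : jmul χ ω l = jmul χ ω' l := by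
  match l with
  | [] => rfl
  | [q] => rfl
  | q0 :: q1 :: l => simp only [jmul]; rw [h _ (by simp)]

lemma jmul_const (χ : Q → ℤ) (ω : List Q → ℤ) (l : List Q) (a : ℤ)
    (h : ∀ q ∈ l, χ q = a) : jmul χ ω l = 0 := by
  match l with
  | [] => rfl
  | [q] => rfl
  | q0 :: q1 :: l => simp [jmul, h]

lemma jmul_neg (χ : Q → ℤ) (ω : List Q → ℤ) (a : ℤ) (l : List Q) :
    jmul χ (fun l => a * ω l) l = a * jmul χ ω l := by
  match l with
  | [] => simp [jmul]
  | [q] => simp [jmul]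
  | q0 :: q1 :: l => simp only [jmul]; ring

/-- Iterated products. -/
def wmul (χf χg : Q → ℤ) (χ : ℕ → Q → ℤ) : ℕ → (List Q → ℤ) → List Q → ℤ
  | 0, τ => jmul χf (jmul χg τ)
  | k+1, τ => wmul χf χg χ k (jmul (χ k) τ)

variable (χf χg : Q → ℤ) (χ : ℕ → Q → ℤ)

lemma wmul_congr (k : ℕ) (τ τ' : List Q → ℤ) (l : List Q)
    (h : ∀ l' : List Q, l' ⊆ l → τ l' = τ' l') : wmul χf χg χ k τ l = wmul χf χg χ k τ' l := by
  induction k generalizing τ τ' with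
  | zero =>
    exact jmul_congr _ _ _ _ fun l' hl' => jmul_congr _ _ _ _ fun l'' hl'' =>
      h _ (List.Subset.trans hl'' hl')
  | succ k ih =>
    exact ih _ _ fun l' hl' => jmul_congr _ _ _ _ fun l'' hl'' => h _ (List.Subset.trans hl'' hl')

lemma wmul_smul (k : ℕ) (τ : List Q → ℤ) (a : ℤ) (l : List Q) :
    wmul χf χg χ k (fun l => a * τ l) l = a * wmul χf χg χ k τ l := by
  induction k generalizing τ with
  | zero =>
    simp only [wmul]
    rw [← jmul_neg]
    exact jmul_congr _ _ _ _ fun l' hl' => jmul_neg _ _ _ _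
  | succ k ih =>
    simp only [wmul]
    rw [← ih]
    exact wmul_congr _ _ _ _ _ _ _ fun l' hl' => jmul_neg _ _ _ _

lemma wmul_zero (k : ℕ) (τ : List Q → ℤ) (l : List Q) (h : ∀ l' : List Q, l' ⊆ l → τ l' = 0) :
    wmul χf χg χ k τ l = 0 := by
  rw [wmul_congr χf χg χ k τ (fun l => 0 * τ l) l (by simpa using h), wmul_smul, zero_mul]

lemma wmul_const_f (k : ℕ) (τ : List Q → ℤ) (l : List Q) (a : ℤ) (h : ∀ q ∈ l, χf q = a) :
    wmul χf χg χ k τ l = 0 := by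
  induction k generalizing τ with
  | zero => exact jmul_const _ _ _ a h
  | succ k ih => exact ih _

lemma wmul_const_g (k : ℕ) (τ : List Q → ℤ) (l : List Q) (a : ℤ) (h : ∀ q ∈ l, χg q = a) :
    wmul χf χg χ k τ l = 0 := by
  induction k generalizing τ with
  | zero =>
    have : jmul χf (jmul χg τ) l = jmul χf (fun l => 0 * τ l) l :=
      jmul_congr _ _ _ _ fun l' hl' => by
        rw [jmul_const χg τ l' a (fun q hq => h q (hl' hq))]; simp
    simp only [wmul]
    rw [this, jmul_neg, zero_mul]
  | succ k ih => exact ih _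

lemma wmul_const (k j : ℕ) (hj : j < k) (τ : List Q → ℤ) (l : List Q) (a : ℤ)
    (h : ∀ q ∈ l, χ j q = a) : wmul χf χg χ k τ l = 0 := by
  induction k generalizing τ with
  | zero => omega
  | succ k ih =>
    rcases Nat.lt_succ_iff_lt_or_eq.1 hj with hj | rfl
    · exact ih hj _
    · simp only [wmul]
      exact wmul_zero _ _ _ _ _ _ fun l' hl' => jmul_const _ _ _ a fun q hq => h q (hl' hq)

lemma wmul_nil (k : ℕ) (τ : List Q → ℤ) : wmul χf χg χ k τ [] = 0 :=
  wmul_const_f _ _ _ _ _ _ 0 (by simp)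

lemma cobd_wmul (k : ℕ) (τ : List Q → ℤ) (h0 : τ [] = 0) (l : List Q) :
    cobd (wmul χf χg χ k τ) l = (-1) ^ k * wmul χf χg χ k (cobd τ) l := by
  induction k generalizing τ with
  | zero =>
    simp only [wmul]
    rw [cobd_jmul _ _ (jmul_nil _ _)]
    have : jmul χf (cobd (jmul χg τ)) l = jmul χf (fun l => (-1) * jmul χg (cobd τ) l) l :=
      jmul_congr _ _ _ _ fun l' _ => by rw [cobd_jmul _ _ h0]; ring
    rw [this, jmul_neg]; ring
  | succ k ih =>
    simp only [wmul]
    rw [ih _ (jmul_nil _ _)]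
    have : wmul χf χg χ k (cobd (jmul (χ k) τ)) l
        = wmul χf χg χ k (fun l => (-1) * jmul (χ k) (cobd τ) l) l :=
      wmul_congr _ _ _ _ _ _ _ fun l' _ => by rw [cobd_jmul _ _ h0]; ring
    rw [this, wmul_smul]; ring

end algebra
end HNC

namespace HNC

/-- The parameter cube. -/
abbrev Cube (n : ℕ) := Fin n → Icc (-1:ℝ) 1

section induct
variable {X : Type*} {n : ℕ}

/-- small lists -/
def SmallL (R : X → X → Prop) (ε : ℝ) (l : List (X × Cube n)) : Prop :=
  ∀ a ∈ l, ∀ b ∈ l, R a.1 b.1 ∧ ∀ j, |((a.2 j : ℝ)) - b.2 j| ≤ ε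

/-- the bottom and top of the interval -/
def itop : Icc (-1:ℝ) 1 := ⟨1, by norm_num⟩
def ibot : Icc (-1:ℝ) 1 := ⟨-1, by norm_num⟩

/-- change a coordinate -/
def upd (k : Fin n) (s : Icc (-1:ℝ) 1) (z : X × Cube n) : X × Cube n :=
  (z.1, Function.update z.2 k s)

lemma small_prism {R : X → X → Prop} {ε : ℝ} (hε : 0 ≤ ε) {l l' : List (X × Cube n)} (k : Fin n)
    (s t : Icc (-1:ℝ) 1) (hst : |(s:ℝ) - t| ≤ ε) (hl : SmallL R ε l)
    (h : ∀ q ∈ l', ∃ z ∈ l, q = upd k s z ∨ q = upd k t z) : SmallL R ε l' := by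
  intro a ha b hb
  obtain ⟨z, hz, h1⟩ := h a ha
  obtain ⟨y, hy, h2⟩ := h b hb
  obtain ⟨h3, h4⟩ := hl z hz y hy
  constructor
  · rcases h1 with rfl | rfl <;> rcases h2 with rfl | rfl <;> exact h3
  · intro j
    have hts : |(t:ℝ) - s| ≤ ε := by rw [abs_sub_comm]; exact hst
    by_cases hj : j = k
    · subst hj
      rcases h1 with rfl | rfl <;> rcases h2 with rfl | rfl <;> simp [upd, hε, hst, hts]
    · rcases h1 with rfl | rfl <;> rcases h2 with rfl | rfl <;> simp [upd, hj, h4 j]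

theorem cochain_induction (R : X → X → Prop) (ε : ℝ) (hε : 0 < ε)
    (bad : X → Prop) (χf χg : X × Cube n → ℤ) (χ : ℕ → X × Cube n → ℤ)
    (H1 : ∀ l, SmallL R ε l → (∃ a, ∀ q ∈ l, χf q = a) ∨ (∃ a, ∀ q ∈ l, χg q = a) ∨
      ∃ j : Fin n, ∃ a, ∀ q ∈ l, χ j q = a)
    (H2 : ∀ l, SmallL R ε l → (∃ q ∈ l, bad q.1) →
      (∃ a, ∀ q ∈ l, χf q = a) ∨ (∃ a, ∀ q ∈ l, χg q = a))
    (H3 : ∀ l, SmallL R ε l → ∀ j : Fin n, (∃ q ∈ l, q.2 j = ibot) → ∀ q ∈ l, χ j q = 0)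
    (H4 : ∀ l, SmallL R ε l → ∀ j : Fin n, (∃ q ∈ l, q.2 j = itop) → ∀ q ∈ l, χ j q = 1) :
    ∃ b : List (X × Cube n) → ℤ, ∀ l, SmallL R ε l → (∀ q ∈ l, q.2 = fun _ => itop) →
      cobd b l = jmul χf (jmul χg (ecoch fun _ => 1)) l ∧
      ((∃ q ∈ l, bad q.1) → b l = 0) := by
  have key : ∀ m k : ℕ, k + m = n → ∃ b : List (X × Cube n) → ℤ, ∀ l, SmallL R ε l →
      (∀ q ∈ l, ∀ j : Fin n, k ≤ j → q.2 j = itop) →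
      cobd b l = wmul χf χg χ k (ecoch fun _ => 1) l ∧
      ((∃ q ∈ l, bad q.1) → b l = 0) ∧
      ((∃ q ∈ l, ∃ j : Fin n, j < k ∧ (q.2 j = ibot ∨ q.2 j = itop)) → b l = 0) := by
    intro m
    induction m with
    | zero =>
      intro k hk
      obtain rfl : k = n := by omega
      refine ⟨fun _ => 0, fun l hl _ => ⟨?_, by simp, by simp⟩⟩
      rw [cobd_zero]
      rcases H1 l hl with ⟨a, h⟩ | ⟨a, h⟩ | ⟨j, a, h⟩
      · rw [wmul_const_f _ _ _ _ _ _ a h]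
      · rw [wmul_const_g _ _ _ _ _ _ a h]
      · rw [wmul_const _ _ _ _ j j.2 _ _ a h]
    | succ m ih =>
      intro k hkm
      obtain ⟨b, hb⟩ := ih (k+1) (by omega)
      have hkn : k < n := by omega
      set K : Fin n := ⟨k, hkn⟩ with hK
      set ω : List (X × Cube n) → ℤ :=
        fun l => wmul χf χg χ k (ecoch (χ k)) l - (-1) ^ k * b l with hω
      obtain ⟨N, hN⟩ := exists_nat_gt (2 / ε)
      have hN0 : (0:ℝ) < N := lt_trans (by positivity) hN
      set s : ℕ → Icc (-1:ℝ) 1 := fun r => projIcc (-1:ℝ) 1 (by norm_num) (-1 + 2 * r / N) with hs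
      have hs0 : s 0 = ibot := by
        simp only [hs]; apply Subtype.ext; rw [coe_projIcc]; simp [ibot]
      have hsN : s N = itop := by
        simp only [hs]; apply Subtype.ext; rw [coe_projIcc]
        have : -1 + 2 * (N:ℝ) / N = 1 := by field_simp; norm_num
        simp [this, itop]
      have hstep : ∀ r, |((s r : ℝ)) - s (r+1)| ≤ ε := by
        intro r
        have h1 : |((s r : ℝ)) - s (r+1)| ≤ |(-1 + 2 * (r:ℝ) / N) - (-1 + 2 * ((r+1 : ℕ):ℝ) / N)| := by
          simp only [hs]
          have := abs_projIcc_sub_projIcc (a := (-1:ℝ)) (b := 1) (c := -1 + 2 * (r:ℝ) / N)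
            (d := (-1 + 2 * ((r+1 : ℕ):ℝ) / N)) (by norm_num)
          exact this
        refine h1.trans ?_
        have : (-1 + 2 * (r:ℝ) / N) - (-1 + 2 * ((r+1 : ℕ):ℝ) / N) = - (2 / N) := by
          push_cast; ring
        rw [this, abs_neg, abs_of_pos (by positivity)]
        rw [div_lt_iff₀ hε] at hN
        rw [div_le_iff₀ hN0]; linarith
      -- all lists in question are in `Q_{k+1}`
      have hQ : ∀ l l' : List (X × Cube n), (∀ q ∈ l, ∀ j : Fin n, k ≤ j → q.2 j = itop) →
          ∀ t t', (∀ q ∈ l', ∃ z ∈ l, q = upd K t z ∨ q = upd K t' z) →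
          (∀ q ∈ l', ∀ j : Fin n, k + 1 ≤ j → q.2 j = itop) := by
        intro l l' h1 t t' h2 q hq j hj
        obtain ⟨z, hz, h3⟩ := h2 q hq
        have hjk : j ≠ K := by
          intro h; rw [h] at hj; simp [hK] at hj
        rcases h3 with rfl | rfl <;> simp [upd, hjk] <;> exact h1 z hz j (by omega)
      -- ω is a cocycle
      have hcoc : ∀ l, SmallL R ε l → (∀ q ∈ l, ∀ j : Fin n, k + 1 ≤ j → q.2 j = itop) →
          cobd ω l = 0 := by
        intro l hl hlQ
        rw [hω, cobd_sub, cobd_smul, (hb l hl hlQ).1, cobd_wmul _ _ _ _ _ rfl]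
        have : wmul χf χg χ k (cobd (ecoch (χ k))) l
            = wmul χf χg χ k (jmul (χ k) (ecoch fun _ => 1)) l :=
          wmul_congr _ _ _ _ _ _ _ fun l' _ => cobd_ecoch _ _
        rw [this]; simp [wmul]
      have hbad : ∀ l, SmallL R ε l → (∀ q ∈ l, ∀ j : Fin n, k + 1 ≤ j → q.2 j = itop) →
          (∃ q ∈ l, bad q.1) → ω l = 0 := by
        intro l hl hlQ hq
        simp only [hω]
        rw [(hb l hl hlQ).2.1 hq]
        rcases H2 l hl hq with ⟨a, h⟩ | ⟨a, h⟩
        · rw [wmul_const_f _ _ _ _ _ _ a h]; simp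
        · rw [wmul_const_g _ _ _ _ _ _ a h]; simp
      have hface : ∀ l, SmallL R ε l → (∀ q ∈ l, ∀ j : Fin n, k + 1 ≤ j → q.2 j = itop) →
          (∃ q ∈ l, ∃ j : Fin n, j < k ∧ (q.2 j = ibot ∨ q.2 j = itop)) → ω l = 0 := by
        rintro l hl hlQ ⟨q, hq, j, hj, hqj⟩
        simp only [hω]
        rw [(hb l hl hlQ).2.2 ⟨q, hq, j, by omega, hqj⟩]
        rcases hqj with h | h
        · rw [wmul_const _ _ _ _ j hj _ _ 0 (H3 l hl j ⟨q, hq, h⟩)]; simp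
        · rw [wmul_const _ _ _ _ j hj _ _ 1 (H4 l hl j ⟨q, hq, h⟩)]; simp
      have hbot : ∀ l, l ≠ [] → SmallL R ε l →
          (∀ q ∈ l, ∀ j : Fin n, k + 1 ≤ j → q.2 j = itop) →
          (∀ q ∈ l, q.2 K = ibot) → ω l = 0 := by
        intro l hne hl hlQ h
        obtain ⟨q, hq⟩ := List.exists_mem_of_ne_nil l hne
        simp only [hω]
        rw [(hb l hl hlQ).2.2 ⟨q, hq, K, by simp [hK], Or.inl (h q hq)⟩]
        have h3 := H3 l hl K ⟨q, hq, h q hq⟩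
        rw [wmul_zero _ _ _ _ _ _ (fun l' hl' => ?_)]
        · simp
        · match l' with
          | [] => rfl
          | [y] => exact h3 y (hl' (by simp))
          | _ :: _ :: _ => rfl
      have htop : ∀ l, l ≠ [] → SmallL R ε l →
          (∀ q ∈ l, ∀ j : Fin n, k + 1 ≤ j → q.2 j = itop) →
          (∀ q ∈ l, q.2 K = itop) → ω l = wmul χf χg χ k (ecoch fun _ => 1) l := by
        intro l hne hl hlQ h
        obtain ⟨q, hq⟩ := List.exists_mem_of_ne_nil l hne
        simp only [hω]
        rw [(hb l hl hlQ).2.2 ⟨q, hq, K, by simp [hK], Or.inr (h q hq)⟩]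
        have h3 := H4 l hl K ⟨q, hq, h q hq⟩
        rw [wmul_congr _ _ _ _ _ _ _ (fun l' hl' => ?_), mul_zero, sub_zero]
        match l' with
          | [] => rfl
          | [y] => exact h3 y (hl' (by simp))
          | _ :: _ :: _ => rfl
      refine ⟨fun l => ∑ r ∈ Finset.range N, prism (upd K (s r)) (upd K (s (r+1))) ω l, ?_⟩
      intro l hl hlQ
      refine ⟨?_, ?_, ?_⟩
      · by_cases hne : l = []
        · subst hne; rw [wmul_nil]; rfl
        rw [cobd_sum]
        have : ∀ r ∈ Finset.range N, cobd (prism (upd K (s r)) (upd K (s (r+1))) ω) l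
            = ω (l.map (upd K (s (r+1)))) - ω (l.map (upd K (s r))) := by
          intro r _
          rw [← prism_identity]
          rw [prism_eq_zero _ _ (cobd ω) l, add_zero]
          intro l' h1 h2
          exact hcoc l' (small_prism hε.le K _ _ (hstep r) hl h1) (hQ l l' hlQ _ _ h1)
        rw [Finset.sum_congr rfl this, Finset.sum_range_sub (fun r => ω (l.map (upd K (s r))))]
        rw [hs0, hsN]
        have e1 : l.map (upd K itop) = l := by
          conv_rhs => rw [← List.map_id l]
          apply List.map_congr_left
          intro q hq
          have := hlQ q hq K (by simp [hK])
          simp only [upd, id]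
          rw [← this, Function.update_eq_self]
        rw [e1, htop l hne hl (fun q hq j hj => hlQ q hq j (by omega))
          (fun q hq => hlQ q hq K (by simp [hK]))]
        have hm : ∀ q ∈ l.map (upd K ibot), ∃ z ∈ l, q = upd K ibot z ∨ q = upd K ibot z := by
          intro q hq
          obtain ⟨z, hz, rfl⟩ := List.mem_map.1 hq
          exact ⟨z, hz, Or.inl rfl⟩
        rw [hbot (l.map (upd K ibot)) (by simpa using hne)
          (small_prism hε.le K _ _ (by simpa using hε.le) hl hm) (hQ l _ hlQ _ _ hm), sub_zero]
        intro q hq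
        obtain ⟨z, hz, rfl⟩ := List.mem_map.1 hq
        simp [upd]
      · rintro ⟨q, hq, hqb⟩
        apply Finset.sum_eq_zero
        intro r _
        apply prism_eq_zero
        intro l' h1 h2
        apply hbad l' (small_prism hε.le K _ _ (hstep r) hl h1) (hQ l l' hlQ _ _ h1)
        rcases h2 q hq with h | h
        · exact ⟨_, h, hqb⟩
        · exact ⟨_, h, hqb⟩
      · rintro ⟨q, hq, j, hj, hqj⟩
        apply Finset.sum_eq_zero
        intro r _
        apply prism_eq_zero
        intro l' h1 h2
        apply hface l' (small_prism hε.le K _ _ (hstep r) hl h1) (hQ l l' hlQ _ _ h1)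
        have hjk : j ≠ K := by
          intro h; rw [h] at hj; simp [hK] at hj
        rcases h2 q hq with h | h
        · exact ⟨_, h, j, hj, by simpa [upd, hjk] using hqj⟩
        · exact ⟨_, h, j, hj, by simpa [upd, hjk] using hqj⟩
  obtain ⟨b, hb⟩ := key n 0 (by omega)
  refine ⟨b, fun l hl hlQ => ?_⟩
  have := hb l hl (fun q hq j _ => by rw [hlQ q hq])
  exact ⟨this.1, this.2.1⟩

end induct
end HNC

namespace HNC
open Topology Filter

section circle
variable {X : Type*} [TopologicalSpace X] [CompactSpace X] [T2Space X]

lemma exists_finite_pou (V : X → X → Prop) (hV : ∀ x, ∀ᶠ y in 𝓝 x, V x y) :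
    ∃ (t : Finset X) (π : t → X → ℝ), (∀ j, Continuous (π j)) ∧ (∀ j x, 0 ≤ π j x) ∧
      (∀ x, ∑ j, π j x = 1) ∧ ∀ j : t, ∀ x ∈ closure (Function.support (π j)), V j x := by
  classical
  obtain ⟨t, ht⟩ := isCompact_univ.elim_nhds_subcover (fun x => interior {y | V x y})
    (fun x _ => interior_mem_nhds.2 (hV x))
  obtain ⟨f, hf⟩ := PartitionOfUnity.exists_isSubordinate (ι := t) (s := univ) isClosed_univ
    (fun j => interior {y | V j y}) (fun j => isOpen_interior) (by
      intro x hx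
      obtain ⟨i, hi, hx⟩ := mem_iUnion₂.1 (ht.2 hx)
      exact mem_iUnion.2 ⟨⟨i, hi⟩, hx⟩)
  refine ⟨t, fun j => f j, fun j => (f j).continuous, fun j x => f.nonneg j x, fun x => ?_, ?_⟩
  · rw [← finsum_eq_sum_of_fintype]; exact f.sum_eq_one (mem_univ x)
  · intro j x hx
    exact interior_subset (hf j hx)

theorem circle_step (V : X → X → Prop) (hsymm : ∀ x y, V x y → V y x)
    (hV : ∀ x, ∀ᶠ y in 𝓝 x, V x y) (a : X → X → ℤ)
    (ha : ∀ x y z, V x y → V y z → V x z → a y z - a x z + a x y = 0)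
    (h : X → ℝ) (U : Fin 3 → Set X)
    (h0 : ∀ x ∉ U 0, ∃ m : ℤ, ∀ w, V x w → a x w + h w ∈ Icc (m : ℝ) (m + 1/3))
    (h1 : ∀ x ∉ U 1, ∃ m : ℤ, ∀ w, V x w → a x w + h w ∈ Icc (m - 1/3 : ℝ) m)
    (h2 : ∀ x ∉ U 2, ∃ m : ℤ, ∀ w, V x w → a x w + h w ∈ Icc (m - 2/3 : ℝ) (m - 1/3)) :
    ∃ W : Fin 3 → Set X, (∀ j, IsOpen (W j)) ∧ (∀ j, W j ⊆ U j) ∧ (⋃ j, W j) = univ ∧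
      W 0 ∩ W 1 ∩ W 2 = ∅ := by
  obtain ⟨t, π, hπc, hπ0, hπ1, hπs⟩ := exists_finite_pou V hV
  have hrefl : ∀ x, V x x := fun x => mem_of_mem_nhds (hV x)
  set θ : X → ℝ := fun x => ∑ j : t, π j x * (a x j + h j) with hθ
  have hsupp : ∀ (j : t) x, π j x ≠ 0 → V x j := fun j x hx =>
    hsymm _ _ (hπs j x (subset_closure hx))
  have hcont : Continuous (fun x => ((θ x : ℝ) : AddCircle (1:ℝ))) := by
    rw [continuous_iff_continuousAt]
    intro x
    set θ' : X → ℝ := fun y => ∑ j : t, π j y * (a x j + h j) with hθ'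
    have hc : Continuous θ' := continuous_finsetSum _ fun j _ => (hπc j).mul continuous_const
    have hc' : ContinuousAt (fun y => ((θ' y : ℝ) : AddCircle (1:ℝ))) x :=
      ((AddCircle.continuous_mk' 1).comp hc).continuousAt
    refine hc'.congr ?_
    have hev : ∀ᶠ y in 𝓝 x, ∀ j : t, π j y ≠ 0 → V x j := by
      rw [Filter.eventually_all]
      intro j
      by_cases hx : x ∈ closure (Function.support (π j))
      · exact Eventually.of_forall fun y _ => hsymm _ _ (hπs j x hx)
      · filter_upwards [isClosed_closure.isOpen_compl.mem_nhds hx] with y hy hne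
        exact absurd (subset_closure hne) hy
    filter_upwards [hev, hV x] with y hy hxy
    have : θ y = a y x + θ' y := by
      have e : (a y x : ℝ) = ∑ j : t, π j y * a y x := by
        rw [← Finset.sum_mul, hπ1, one_mul]
      rw [e, hθ, hθ']
      simp only
      rw [← Finset.sum_add_distrib]
      refine Finset.sum_congr rfl fun j _ => ?_
      by_cases hj : π j y = 0
      · simp [hj]
      · have := ha y x j (hsymm _ _ hxy) (hy j hj) (hsupp j y hj)
        have h' : a y j = a y x + a x j := by linarith
        rw [h']; push_cast; ring
    rw [this, AddCircle.coe_add]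
    have : ((a y x : ℝ) : AddCircle (1:ℝ)) = 0 := by
      rw [AddCircle.coe_eq_zero_iff]; exact ⟨a y x, by simp⟩
    rw [this, zero_add]
  -- convexity
  have hconv : ∀ x (l r : ℝ), (∀ w, V x w → a x w + h w ∈ Icc l r) → θ x ∈ Icc l r := by
    intro x l r H
    constructor
    · calc l = ∑ j : t, π j x * l := by rw [← Finset.sum_mul, hπ1, one_mul]
        _ ≤ θ x := by
          refine Finset.sum_le_sum fun j _ => ?_
          by_cases hj : π j x = 0
          · simp [hj]
          · exact mul_le_mul_of_nonneg_left (H j (hsupp j x hj)).1 (hπ0 j x)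
    · calc θ x ≤ ∑ j : t, π j x * r := by
            refine Finset.sum_le_sum fun j _ => ?_
            by_cases hj : π j x = 0
            · simp [hj]
            · exact mul_le_mul_of_nonneg_left (H j (hsupp j x hj)).2 (hπ0 j x)
        _ = r := by rw [← Finset.sum_mul, hπ1, one_mul]
  set A : Fin 3 → Set (AddCircle (1:ℝ)) := fun j =>
    (fun r : ℝ => (r : AddCircle (1:ℝ))) '' Icc (-(j:ℝ)/3) (-(j:ℝ)/3 + 1/3) with hA
  have hAcl : ∀ j, IsClosed (A j) := fun j =>
    (isCompact_Icc.image (AddCircle.continuous_mk' 1)).isClosed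
  have hmem : ∀ (r : ℝ) j, (r : AddCircle (1:ℝ)) ∈ A j ↔
      ∃ m : ℤ, r - m ∈ Icc (-(j:ℝ)/3) (-(j:ℝ)/3 + 1/3) := by
    intro r j
    constructor
    · rintro ⟨s, hs, hsr⟩
      have h1 : ((r - s : ℝ) : AddCircle (1:ℝ)) = 0 := by
        rw [AddCircle.coe_sub, sub_eq_zero]; exact hsr.symm
      rw [AddCircle.coe_eq_zero_iff] at h1
      obtain ⟨m, hm⟩ := h1
      refine ⟨m, ?_⟩
      have : r - m = s := by simp at hm; linarith
      rw [this]; exact hs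
    · rintro ⟨m, hm⟩
      refine ⟨r - m, hm, ?_⟩
      have : ((m : ℝ) : AddCircle (1:ℝ)) = 0 := by
        rw [AddCircle.coe_eq_zero_iff]; exact ⟨m, by simp⟩
      simp only [AddCircle.coe_sub]
      rw [this, sub_zero]
  refine ⟨fun j => {x | ((θ x : ℝ) : AddCircle (1:ℝ)) ∉ A j}, fun j => ?_, ?_, ?_, ?_⟩
  · exact (hAcl j).isOpen_compl.preimage hcont
  · intro j x hx
    by_contra hxU
    apply hx
    rw [hmem]
    fin_cases j
    · obtain ⟨m, hm⟩ := h0 x hxU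
      refine ⟨m, ?_⟩
      have := hconv x _ _ hm
      simp at this ⊢
      constructor <;> linarith [this.1, this.2]
    · obtain ⟨m, hm⟩ := h1 x hxU
      refine ⟨m, ?_⟩
      have := hconv x _ _ hm
      simp only [mem_Icc] at this ⊢
      norm_num at this ⊢
      constructor <;> linarith [this.1, this.2]
    · obtain ⟨m, hm⟩ := h2 x hxU
      refine ⟨m, ?_⟩
      have := hconv x _ _ hm
      simp only [mem_Icc] at this ⊢
      norm_num at this ⊢
      constructor <;> linarith [this.1, this.2]
  · rw [eq_univ_iff_forall]
    intro x
    by_contra hx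
    have hx : ∀ j : Fin 3, ∃ m : ℤ, θ x - m ∈ Icc (-(j:ℝ)/3) (-(j:ℝ)/3 + 1/3) := fun j => by
      rw [← hmem]
      by_contra hj
      exact hx (mem_iUnion.2 ⟨j, hj⟩)
    obtain ⟨m0, p0, q0⟩ := hx 0
    obtain ⟨m1, p1, q1⟩ := hx 1
    obtain ⟨m2, p2, q2⟩ := hx 2
    norm_num at p0 q0 p1 q1 p2 q2
    have e1 : m0 ≤ m1 := by
      have : (m0:ℝ) < m1 + 1 := by linarith
      have : m0 < m1 + 1 := by exact_mod_cast this
      omega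
    have e2 : m1 ≤ m0 := by
      have : (m1:ℝ) < m0 + 1 := by linarith
      have : m1 < m0 + 1 := by exact_mod_cast this
      omega
    have e : m1 = m0 := le_antisymm e2 e1
    subst e
    have hz : θ x = m1 := by linarith
    rw [hz] at p2 q2
    have e3 : (m1:ℝ) < m2 := by linarith
    have e4 : (m2:ℝ) < m1 + 1 := by linarith
    have e3' : m1 < m2 := by exact_mod_cast e3
    have e4' : m2 < m1 + 1 := by exact_mod_cast e4
    omega
  · rw [eq_empty_iff_forall_notMem]
    rintro x ⟨⟨hx0, hx1⟩, hx2⟩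
    simp only [mem_ofPred_eq, hmem, not_exists] at hx0 hx1 hx2
    have hf := Int.floor_le (θ x)
    have hf' := Int.lt_floor_add_one (θ x)
    generalize ⌊θ x⌋ = M at hf hf'
    have i0 := hx0 M
    have i1 := hx1 (M + 1)
    have i2 := hx2 (M + 1)
    simp only [mem_Icc] at i0 i1 i2
    norm_num at i0 i1 i2
    have j0 := i0 (by linarith)
    by_cases hc : θ x - ((M:ℝ) + 1) < -1/3
    · have := i2 (by linarith)
      linarith
    · have := i1 (by linarith)
      linarith

end circle
end HNC

namespace HNC
open Topology Filter

section
variable {X : Type*} [TopologicalSpace X] [CompactSpace X] [T2Space X] {n : ℕ}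

lemma exists_small (N : X × Cube n → Set (X × Cube n)) (hN : ∀ q, N q ∈ 𝓝 q) :
    ∃ (R : X → X → Prop) (ε : ℝ), 0 < ε ∧ (∀ x y, R x y → R y x) ∧
      (∀ x, ∀ᶠ y in 𝓝 x, R x y) ∧
      ∀ l : List (X × Cube n), l ≠ [] → SmallL R ε l → ∃ q0, ∀ q ∈ l, q ∈ N q0 := by
  let _ : UniformSpace X := uniformSpaceOfCompactR1
  obtain ⟨V, hV, hVN⟩ := lebesgue_number_lemma_nhds (K := (univ : Set (X × Cube n)))
    isCompact_univ (U := N) (fun x _ => hN x)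
  obtain ⟨V1, hV1, V2, hV2, hV12⟩ := entourageProd_subset hV
  obtain ⟨V1', hV1', hs, hss⟩ := symm_of_uniformity hV1
  obtain ⟨ε, hε, hεV⟩ := Metric.mem_uniformity_dist.1 hV2
  refine ⟨fun x y => (x, y) ∈ V1', ε / 2, by positivity, fun x y h => hs.symm _ _ h, ?_, ?_⟩
  · intro x
    exact mem_nhds_left x hV1'
  · intro l hne hl
    obtain ⟨q, hq⟩ := List.exists_mem_of_ne_nil l hne
    obtain ⟨q0, hq0⟩ := hVN q (mem_univ _)
    refine ⟨q0, fun q' hq' => hq0 ?_⟩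
    apply hV12
    obtain ⟨h1, h2⟩ := hl q hq q' hq'
    refine ⟨hss h1, hεV ?_⟩
    have : dist q.2 q'.2 ≤ ε / 2 := (dist_pi_le_iff (by positivity)).2 fun j => by
      rw [Subtype.dist_eq, Real.dist_eq]; exact h2 j
    linarith

theorem covers_of_no_common_zero (U : Fin 3 → Set X) (hU : ∀ j, IsOpen (U j))
    (Φ Γ : X × Cube n → ℝ) (κ : Fin n → X × Cube n → ℝ)
    (hΦ : Continuous Φ) (hΓ : Continuous Γ) (hκ : ∀ i, Continuous (κ i))
    (hne : ∀ q, Φ q ≠ 0 ∨ Γ q ≠ 0 ∨ ∃ i, κ i q ≠ 0)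
    (hC0 : ∀ q : X × Cube n, q.1 ∉ U 0 → Φ q < 0)
    (hC1 : ∀ q : X × Cube n, q.1 ∉ U 1 → 0 < Φ q ∨ Γ q < 0)
    (hC2 : ∀ q : X × Cube n, q.1 ∉ U 2 → 0 < Φ q ∨ 0 < Γ q)
    (hb : ∀ (q : X × Cube n) j, q.2 j = ibot → κ j q < 0)
    (ht : ∀ (q : X × Cube n) j, q.2 j = itop → 0 < κ j q) :
    ∃ W : Fin 3 → Set X, (∀ j, IsOpen (W j)) ∧ (∀ j, W j ⊆ U j) ∧ (⋃ j, W j) = univ ∧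
      W 0 ∩ W 1 ∩ W 2 = ∅ := by
  classical
  set N : X × Cube n → Set (X × Cube n) := fun q => {q' |
    ((Φ q < 0 → Φ q' < 0) ∧ (0 < Φ q → 0 < Φ q')) ∧
    ((Γ q < 0 → Γ q' < 0) ∧ (0 < Γ q → 0 < Γ q')) ∧
    (∀ i, (κ i q < 0 → κ i q' < 0) ∧ (0 < κ i q → 0 < κ i q')) ∧
    (∀ j, q.1 ∈ U j → q'.1 ∈ U j) ∧
    (∀ j, (q.2 j ≠ ibot → q'.2 j ≠ ibot) ∧ (q.2 j ≠ itop → q'.2 j ≠ itop))} with hNdef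
  have hsgn : ∀ (φ : X × Cube n → ℝ), Continuous φ → ∀ q, ∀ᶠ q' in 𝓝 q,
      (φ q < 0 → φ q' < 0) ∧ (0 < φ q → 0 < φ q') := by
    intro φ hφ q
    apply Filter.Eventually.and
    · by_cases h : φ q < 0
      · filter_upwards [hφ.continuousAt.eventually (gt_mem_nhds h)] with q' hq' _ using hq'
      · exact Eventually.of_forall fun _ h' => absurd h' h
    · by_cases h : 0 < φ q
      · filter_upwards [hφ.continuousAt.eventually (lt_mem_nhds h)] with q' hq' _ using hq'
      · exact Eventually.of_forall fun _ h' => absurd h' h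
  have hco : ∀ j (s : Icc (-1:ℝ) 1) (q : X × Cube n), ∀ᶠ q' in 𝓝 q, q.2 j ≠ s → q'.2 j ≠ s := by
    intro j s q
    by_cases h : q.2 j ≠ s
    · have hc : Continuous fun q : X × Cube n => q.2 j := by fun_prop
      filter_upwards [hc.continuousAt.eventually_ne h] with q' hq' _ using hq'
    · exact Eventually.of_forall fun _ h' => absurd h' h
  have hN : ∀ q, N q ∈ 𝓝 q := by
    intro q
    have : ∀ᶠ q' in 𝓝 q, q' ∈ N q := by
      refine (hsgn Φ hΦ q).and ((hsgn Γ hΓ q).and ((Filter.eventually_all.2 fun i =>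
        hsgn (κ i) (hκ i) q).and ((Filter.eventually_all.2 fun j => ?_).and
          (Filter.eventually_all.2 fun j => (hco j _ q).and (hco j _ q)))))
      by_cases h : q.1 ∈ U j
      · have := ((hU j).preimage continuous_fst).mem_nhds (x := q) h
        filter_upwards [this] with q' hq' _ using hq'
      · exact Eventually.of_forall fun _ h' => absurd h' h
    exact this
  obtain ⟨R, ε, hε, hRs, hRn, hR⟩ := exists_small N hN
  have hRr : ∀ x, R x x := fun x => mem_of_mem_nhds (hRn x)
  set χf : X × Cube n → ℤ := fun q => if 0 < Φ q then 1 else 0 with hχf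
  set χg : X × Cube n → ℤ := fun q => if 0 < Γ q then 1 else 0 with hχg
  set χ : ℕ → X × Cube n → ℤ := fun k q => if h : k < n then (if 0 < κ ⟨k, h⟩ q then 1 else 0) else 0
    with hχ
  have hneg : ∀ r : ℝ, r < 0 → (if 0 < r then (1:ℤ) else 0) = 0 := fun r hr =>
    if_neg (not_lt.2 hr.le)
  have hpos : ∀ r : ℝ, 0 < r → (if 0 < r then (1:ℤ) else 0) = 1 := fun r hr => if_pos hr
  have hχj : ∀ (j : Fin n) q, χ j q = if 0 < κ j q then 1 else 0 := by
    intro j q; simp [hχ]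
  -- facts for small lists
  have hS0 : ∀ l, SmallL R ε l → (∃ q ∈ l, q.1 ∉ U 0) → ∀ q ∈ l, χf q = 0 := by
    rintro l hl ⟨q, hq, hqU⟩ q' hq'
    obtain ⟨q0, h0⟩ := hR l (List.ne_nil_of_mem hq) hl
    have := hC0 q0 (fun h => hqU ((h0 q hq).2.2.2.1 0 h))
    exact hneg _ ((h0 q' hq').1.1 this)
  have hS1 : ∀ l, SmallL R ε l → (∃ q ∈ l, q.1 ∉ U 1) → (∀ q ∈ l, χf q = 1) ∨ (∀ q ∈ l, χg q = 0) := by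
    rintro l hl ⟨q, hq, hqU⟩
    obtain ⟨q0, h0⟩ := hR l (List.ne_nil_of_mem hq) hl
    rcases hC1 q0 (fun h => hqU ((h0 q hq).2.2.2.1 1 h)) with h | h
    · exact Or.inl fun q' hq' => hpos _ ((h0 q' hq').1.2 h)
    · exact Or.inr fun q' hq' => hneg _ ((h0 q' hq').2.1.1 h)
  have hS2 : ∀ l, SmallL R ε l → (∃ q ∈ l, q.1 ∉ U 2) → (∀ q ∈ l, χf q = 1) ∨ (∀ q ∈ l, χg q = 1) := by
    rintro l hl ⟨q, hq, hqU⟩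
    obtain ⟨q0, h0⟩ := hR l (List.ne_nil_of_mem hq) hl
    rcases hC2 q0 (fun h => hqU ((h0 q hq).2.2.2.1 2 h)) with h | h
    · exact Or.inl fun q' hq' => hpos _ ((h0 q' hq').1.2 h)
    · exact Or.inr fun q' hq' => hpos _ ((h0 q' hq').2.1.2 h)
  obtain ⟨b, hb'⟩ := cochain_induction R ε hε (fun x => x ∉ U 0 ∨ x ∉ U 1 ∨ x ∉ U 2) χf χg χ
    (by
      intro l hl
      by_cases hnil : l = []
      · subst hnil; simp
      obtain ⟨q0, h0⟩ := hR l hnil hl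
      rcases hne q0 with h | h | ⟨j, h⟩
      · left
        rcases lt_or_gt_of_ne h with h | h
        · exact ⟨0, fun q hq => hneg _ ((h0 q hq).1.1 h)⟩
        · exact ⟨1, fun q hq => hpos _ ((h0 q hq).1.2 h)⟩
      · right; left
        rcases lt_or_gt_of_ne h with h | h
        · exact ⟨0, fun q hq => hneg _ ((h0 q hq).2.1.1 h)⟩
        · exact ⟨1, fun q hq => hpos _ ((h0 q hq).2.1.2 h)⟩
      · right; right
        refine ⟨j, ?_⟩
        rcases lt_or_gt_of_ne h with h | h
        · exact ⟨0, fun q hq => by rw [hχj]; exact hneg _ (((h0 q hq).2.2.1 j).1 h)⟩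
        · exact ⟨1, fun q hq => by rw [hχj]; exact hpos _ (((h0 q hq).2.2.1 j).2 h)⟩)
    (by
      rintro l hl ⟨q, hq, h | h | h⟩
      · exact Or.inl ⟨0, hS0 l hl ⟨q, hq, h⟩⟩
      · rcases hS1 l hl ⟨q, hq, h⟩ with h | h
        · exact Or.inl ⟨_, h⟩
        · exact Or.inr ⟨_, h⟩
      · rcases hS2 l hl ⟨q, hq, h⟩ with h | h
        · exact Or.inl ⟨_, h⟩
        · exact Or.inr ⟨_, h⟩)
    (by
      rintro l hl j ⟨q, hq, hqj⟩ q' hq'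
      obtain ⟨q0, h0⟩ := hR l (List.ne_nil_of_mem hq) hl
      have h1 : q0.2 j = ibot := by
        by_contra h
        exact ((h0 q hq).2.2.2.2 j).1 h hqj
      rw [hχj]; exact hneg _ (((h0 q' hq').2.2.1 j).1 (hb q0 j h1)))
    (by
      rintro l hl j ⟨q, hq, hqj⟩ q' hq'
      obtain ⟨q0, h0⟩ := hR l (List.ne_nil_of_mem hq) hl
      have h1 : q0.2 j = itop := by
        by_contra h
        exact ((h0 q hq).2.2.2.2 j).2 h hqj
      rw [hχj]; exact hpos _ (((h0 q' hq').2.2.1 j).2 (ht q0 j h1)))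
  set e : X → X × Cube n := fun x => (x, fun _ => itop) with he
  have hsm3 : ∀ x y z, R x y → R y z → R x z → SmallL R ε [e x, e y, e z] := by
    intro x y z hxy hyz hxz p hp q hq
    refine ⟨?_, fun j => ?_⟩
    · simp only [List.mem_cons, List.not_mem_nil, or_false] at hp hq
      rcases hp with rfl | rfl | rfl <;> rcases hq with rfl | rfl | rfl <;>
        simp only [he] <;> first | exact hRr _ | assumption | exact hRs _ _ (by assumption)
    · simp only [List.mem_cons, List.not_mem_nil, or_false] at hp hq
      rcases hp with rfl | rfl | rfl <;> rcases hq with rfl | rfl | rfl <;> simp [he, hε.le]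
  have hsm2 : ∀ x y, R x y → SmallL R ε [e x, e y] := by
    intro x y hxy p hp q hq
    refine hsm3 x y y hxy (hRr y) hxy p ?_ q ?_
    · simp only [List.mem_cons, List.not_mem_nil, or_false] at hp ⊢; tauto
    · simp only [List.mem_cons, List.not_mem_nil, or_false] at hq ⊢; tauto
  have hχ01 : ∀ q, χf q = 0 ∨ χf q = 1 := fun q => by simp only [hχf]; split_ifs <;> simp
  have hη01 : ∀ q, χg q = 0 ∨ χg q = 1 := fun q => by simp only [hχg]; split_ifs <;> simp
  have hbz : ∀ x w, R x w → (x ∉ U 0 ∨ x ∉ U 1 ∨ x ∉ U 2) → b [e x, e w] = 0 := by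
    intro x w hxw hx
    exact (hb' [e x, e w] (hsm2 x w hxw) (by simp [he])).2 ⟨e x, by simp, hx⟩
  refine circle_step R hRs hRn
    (fun x y => (1 - χf (e x)) * (χg (e y) - χg (e x)) + b [e x, e y]) ?_
    (fun w => if χf (e w) = 1 then -1/3 else if χg (e w) = 1 then -2/3 else 0) U ?_ ?_ ?_
  · intro x y z hxy hyz hxz
    have := (hb' [e x, e y, e z] (hsm3 x y z hxy hyz hxz) (by simp [he])).1
    simp only [cobd, jmul, ecoch] at this
    have hh : b [e y, e z] - b [e x, e z] + b [e x, e y] =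
      (χf (e y) - χf (e x)) * (χg (e z) - χg (e y)) := by linarith
    linear_combination hh
  · intro x hx
    refine ⟨- χg (e x), fun w hw => ?_⟩
    have h0 := hS0 [e x, e w] (hsm2 x w hw) ⟨e x, by simp, hx⟩
    rw [hbz x w hw (Or.inl hx), h0 (e x) (by simp), h0 (e w) (by simp)]
    rcases hη01 (e w) with h | h <;> rw [h] <;> push_cast <;> norm_num
    linarith
  · intro x hx
    refine ⟨0, fun w hw => ?_⟩
    rw [hbz x w hw (Or.inr (Or.inl hx))]
    rcases hS1 [e x, e w] (hsm2 x w hw) ⟨e x, by simp, hx⟩ with h0 | h0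
    · rw [h0 (e x) (by simp), h0 (e w) (by simp)]; norm_num
    · rw [h0 (e x) (by simp), h0 (e w) (by simp)]
      rcases hχ01 (e w) with h | h <;> rw [h] <;> norm_num
  · intro x hx
    refine ⟨0, fun w hw => ?_⟩
    rw [hbz x w hw (Or.inr (Or.inr hx))]
    rcases hS2 [e x, e w] (hsm2 x w hw) ⟨e x, by simp, hx⟩ with h0 | h0
    · rw [h0 (e x) (by simp), h0 (e w) (by simp)]; norm_num
    · rw [h0 (e x) (by simp), h0 (e w) (by simp)]
      rcases hχ01 (e w) with h | h <;> rw [h] <;> norm_num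

end
end HNC

namespace HNC
open Topology Filter

lemma covDimLE_one_of_three (X : Type u) [TopologicalSpace X]
    (H : ∀ U : Fin 3 → Set X, (∀ j, IsOpen (U j)) → (⋃ j, U j) = univ →
      ∃ W : Fin 3 → Set X, (∀ j, IsOpen (W j)) ∧ (∀ j, W j ⊆ U j) ∧ (⋃ j, W j) = univ ∧
      W 0 ∩ W 1 ∩ W 2 = ∅) : CovDimLE X 1 := by
  classical
  rintro U hUf ⟨hUo, hUc⟩
  have : Fintype U := hUf.fintype
  have key : ∀ T : Finset (U × U × U), ∃ v : U → Set X, (∀ i, IsOpen (v i)) ∧ (∀ i, v i ⊆ i) ∧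
      (⋃ i, v i) = univ ∧ ∀ t ∈ T, t.1 ≠ t.2.1 → t.1 ≠ t.2.2 → t.2.1 ≠ t.2.2 →
        v t.1 ∩ v t.2.1 ∩ v t.2.2 = ∅ := by
    intro T
    induction T using Finset.induction_on with
    | empty =>
      exact ⟨fun i => i, fun i => hUo i i.2, fun i => Subset.rfl, by rw [← sUnion_eq_iUnion, hUc],
        by simp⟩
    | insert t T _ ih =>
      obtain ⟨v, hvo, hvU, hvc, hvT⟩ := ih
      obtain ⟨a, b, c⟩ := t
      by_cases hd : a ≠ b ∧ a ≠ c ∧ b ≠ c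
      · obtain ⟨hab, hac, hbc⟩ := hd
        obtain ⟨W, hWo, hWs, hWc, hWe⟩ := H
          ![v a, v b, ⋃ j ∈ {j : U | j ≠ a ∧ j ≠ b}, v j]
          (by
            intro j
            fin_cases j
            · exact hvo a
            · exact hvo b
            · exact isOpen_biUnion fun i _ => hvo i)
          (by
            rw [eq_univ_iff_forall]
            intro x
            have : x ∈ ⋃ i, v i := by rw [hvc]; trivial
            obtain ⟨i, hi⟩ := mem_iUnion.1 this
            by_cases h1 : i = a
            · exact mem_iUnion.2 ⟨0, by subst h1; exact hi⟩
            by_cases h2 : i = b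
            · exact mem_iUnion.2 ⟨1, by subst h2; exact hi⟩
            exact mem_iUnion.2 ⟨2, mem_iUnion₂.2 ⟨i, ⟨h1, h2⟩, hi⟩⟩)
        have hW0 : W 0 ⊆ v a := hWs 0
        have hW1 : W 1 ⊆ v b := hWs 1
        have hW2 : W 2 ⊆ ⋃ j ∈ {j : U | j ≠ a ∧ j ≠ b}, v j := hWs 2
        set v' : U → Set X := fun j => if j = a then W 0 else if j = b then W 1 else v j ∩ W 2
          with hv'
        have hva : v' a = W 0 := by simp [hv']
        have hvb : v' b = W 1 := by simp [hv', hab.symm]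
        have hvj : ∀ j, j ≠ a → j ≠ b → v' j = v j ∩ W 2 := by
          intro j h1 h2; simp [hv', h1, h2]
        have hsub : ∀ j, v' j ⊆ v j := by
          intro j
          by_cases h1 : j = a
          · subst h1; rw [hva]; exact hW0
          by_cases h2 : j = b
          · subst h2; rw [hvb]; exact hW1
          rw [hvj j h1 h2]; exact inter_subset_left
        refine ⟨v', ?_, fun i => (hsub i).trans (hvU i), ?_, ?_⟩
        · intro j
          by_cases h1 : j = a
          · subst h1; rw [hva]; exact hWo 0
          by_cases h2 : j = b
          · subst h2; rw [hvb]; exact hWo 1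
          rw [hvj j h1 h2]; exact (hvo j).inter (hWo 2)
        · rw [eq_univ_iff_forall]
          intro x
          have : x ∈ ⋃ i, W i := by rw [hWc]; trivial
          obtain ⟨i, hi⟩ := mem_iUnion.1 this
          fin_cases i
          · exact mem_iUnion.2 ⟨a, by rw [hva]; exact hi⟩
          · exact mem_iUnion.2 ⟨b, by rw [hvb]; exact hi⟩
          · obtain ⟨j, hj, hx⟩ := mem_iUnion₂.1 (hW2 hi)
            exact mem_iUnion.2 ⟨j, by rw [hvj j hj.1 hj.2]; exact ⟨hx, hi⟩⟩
        · intro t ht h1 h2 h3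
          rcases Finset.mem_insert.1 ht with rfl | ht
          · simp only
            rw [hva, hvb, hvj c hac.symm hbc.symm]
            rw [eq_empty_iff_forall_notMem] at hWe ⊢
            rintro x ⟨hx, hx'⟩
            exact hWe x ⟨hx, hx'.2⟩
          · have := hvT t ht h1 h2 h3
            rw [← subset_empty_iff] at this ⊢
            exact (inter_subset_inter (inter_subset_inter (hsub _) (hsub _)) (hsub _)).trans this
      · refine ⟨v, hvo, hvU, hvc, ?_⟩
        intro t ht h1 h2 h3
        rcases Finset.mem_insert.1 ht with rfl | ht
        · exact absurd ⟨h1, h2, h3⟩ hd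
        · exact hvT t ht h1 h2 h3
  obtain ⟨v, hvo, hvU, hvc, hvT⟩ := key Finset.univ
  refine ⟨range v, finite_range v, ⟨?_, ?_⟩, ?_, ?_⟩
  · rintro _ ⟨i, rfl⟩; exact hvo i
  · rw [sUnion_range, hvc]
  · rintro _ ⟨i, rfl⟩; exact ⟨i, i.2, hvU i⟩
  · intro x
    by_contra hcon
    have hcon : 2 < {s ∈ range v | x ∈ s}.ncard := by omega
    rw [Set.two_lt_ncard_iff ((finite_range v).subset (fun s hs => hs.1))] at hcon
    obtain ⟨_, _, _, ⟨⟨i, rfl⟩, hi⟩, ⟨⟨j, rfl⟩, hj⟩, ⟨⟨k, rfl⟩, hk⟩, h1, h2, h3⟩ := hcon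
    have := hvT (i, j, k) (Finset.mem_univ _) (fun h => h1 (by simp only at h; rw [h]))
      (fun h => h2 (by simp only at h; rw [h])) (fun h => h3 (by simp only at h; rw [h]))
    rw [eq_empty_iff_forall_notMem] at this
    exact this x ⟨⟨hi, hj⟩, hk⟩

lemma exists_three_cover (X : Type u) [TopologicalSpace X] (h : 2 ≤ covDim X) :
    ∃ U : Fin 3 → Set X, (∀ j, IsOpen (U j)) ∧ (⋃ j, U j) = univ ∧
      ¬ ∃ W : Fin 3 → Set X, (∀ j, IsOpen (W j)) ∧ (∀ j, W j ⊆ U j) ∧ (⋃ j, W j) = univ ∧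
      W 0 ∩ W 1 ∩ W 2 = ∅ := by
  by_contra hcon
  push Not at hcon
  have h1 : CovDimLE X 1 := covDimLE_one_of_three X fun U h1 h2 => by
    by_contra hne
    obtain h3 := hcon U h1 h2
    push Not at hne
    obtain ⟨W, a1, a2, a3, a4⟩ := h3
    exact (hne W a1 a2 a3).ne_empty a4
  have : covDim X ≤ ((1 : ℕ) : ℕ∞) := sInf_le ⟨1, h1, rfl⟩
  have h2 := h.trans this
  norm_num at h2

end HNC

namespace HNC
open Topology Filter

section hyper
variable {Q : Type u} [TopologicalSpace Q]

lemma sub_induced : (Subcontinua.instTopologicalSpace Q) =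
    TopologicalSpace.induced (fun A : Subcontinua Q => A.1) (TopologicalSpace.vietoris Q) := by
  rw [TopologicalSpace.vietoris, induced_generateFrom_eq, Subcontinua.instTopologicalSpace]
  congr 1
  ext s
  constructor
  · rintro (⟨U, hU, rfl⟩ | ⟨U, hU, rfl⟩)
    · exact ⟨_, Or.inl ⟨U, hU, rfl⟩, rfl⟩
    · exact ⟨_, Or.inr ⟨U, hU, rfl⟩, rfl⟩
  · rintro ⟨_, ⟨U, hU, rfl⟩ | ⟨U, hU, rfl⟩, rfl⟩
    · exact Or.inl ⟨U, hU, rfl⟩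
    · exact Or.inr ⟨U, hU, rfl⟩

lemma isOpen_sub {U : Set Q} (hU : IsOpen U) : IsOpen {A : Subcontinua Q | A.1 ⊆ U} :=
  isOpen_generateFrom_of_mem (Or.inl ⟨U, hU, rfl⟩)

lemma isOpen_meet {U : Set Q} (hU : IsOpen U) : IsOpen {A : Subcontinua Q | (A.1 ∩ U).Nonempty} :=
  isOpen_generateFrom_of_mem (Or.inr ⟨U, hU, rfl⟩)

lemma isClosed_sub {C : Set Q} (hC : IsClosed C) : IsClosed {A : Subcontinua Q | A.1 ⊆ C} := by
  rw [← isOpen_compl_iff]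
  convert isOpen_meet hC.isOpen_compl using 1
  ext A
  simp only [mem_compl_iff, mem_ofPred_eq]
  rw [Set.inter_compl_nonempty_iff]

variable [CompactSpace Q] [T2Space Q]

/-- forget connectedness -/
def toC (A : Subcontinua Q) : Compacts Q := ⟨A.1, A.2.1.isCompact⟩

lemma toC_isClosedEmbedding : IsClosedEmbedding (toC : Subcontinua Q → Compacts Q) := by
  have hind : IsInducing (toC : Subcontinua Q → Compacts Q) := by
    let _ : TopologicalSpace (Set Q) := TopologicalSpace.vietoris Q
    have h1 : IsInducing (fun K : Compacts Q => (K : Set Q)) := Compacts.isEmbedding_coe.isInducing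
    rw [← h1.of_comp_iff]
    exact ⟨sub_induced⟩
  refine ⟨⟨hind, ?_⟩, ?_⟩
  · intro A B h
    apply Subtype.ext
    exact congrArg (fun K : Compacts Q => (K : Set Q)) h
  · rw [← isOpen_compl_iff, isOpen_iff_mem_nhds]
    intro K hK
    have hK' : ¬ IsConnected (K : Set Q) := fun h => hK ⟨⟨K, K.isCompact.isClosed, h⟩, rfl⟩
    by_cases hne : (K : Set Q).Nonempty
    · have hp : ¬ IsPreconnected (K : Set Q) := fun h => hK' ⟨hne, h⟩
      rw [isPreconnected_closed_iff] at hp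
      push Not at hp
      obtain ⟨t, t', ht, ht', hsub, h1, h2, h3⟩ := hp
      have hd : Disjoint ((K : Set Q) ∩ t) (K ∩ t') := by
        rw [Set.disjoint_iff_inter_eq_empty, ← h3]; ext; simp; tauto
      obtain ⟨U, V, hU, hV, hUs, hVs, hUV⟩ :=
        SeparatedNhds.of_isCompact_isCompact (K.isCompact.inter_right ht)
          (K.isCompact.inter_right ht') hd
      have hop : IsOpen ({L : Compacts Q | (L : Set Q) ⊆ U ∪ V} ∩
          ({L : Compacts Q | ((L : Set Q) ∩ U).Nonempty} ∩
            {L : Compacts Q | ((L : Set Q) ∩ V).Nonempty})) :=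
        (Compacts.isOpen_subsets_of_isOpen (hU.union hV)).inter
          ((Compacts.isOpen_inter_nonempty_of_isOpen hU).inter
            (Compacts.isOpen_inter_nonempty_of_isOpen hV))
      refine mem_of_superset (hop.mem_nhds ⟨?_, ?_, ?_⟩) ?_
      · intro x hx
        rcases hsub hx with h | h
        · exact Or.inl (hUs ⟨hx, h⟩)
        · exact Or.inr (hVs ⟨hx, h⟩)
      · obtain ⟨x, hx⟩ := h1
        exact ⟨x, hx.1, hUs hx⟩
      · obtain ⟨x, hx⟩ := h2
        exact ⟨x, hx.1, hVs hx⟩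
      · rintro L ⟨l1, l2, l3⟩ ⟨A, rfl⟩
        obtain ⟨x, _, hx⟩ := A.2.2.2 U V hU hV l1 l2 l3
        exact Set.disjoint_left.1 hUV hx.1 hx.2
    · have hop : IsOpen {L : Compacts Q | (L : Set Q) ⊆ ∅} :=
        Compacts.isOpen_subsets_of_isOpen isOpen_empty
      refine mem_of_superset (hop.mem_nhds ?_) ?_
      · rw [Set.not_nonempty_iff_eq_empty] at hne
        exact hne.subset
      · rintro L hL ⟨A, rfl⟩
        obtain ⟨x, hx⟩ := A.2.2.1
        exact hL hx

instance : CompactSpace (Subcontinua Q) := toC_isClosedEmbedding.compactSpace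
instance : T2Space (Subcontinua Q) := toC_isClosedEmbedding.isEmbedding.t2Space

/-- The maximum of a function over a set. -/
noncomputable def mx (h : Q → ℝ) (A : Set Q) : ℝ := sSup (h '' A)

lemma exists_mx {h : Q → ℝ} (hh : Continuous h) {A : Set Q} (hA : IsClosed A) (hne : A.Nonempty) :
    ∃ x ∈ A, h x = mx h A := by
  obtain ⟨x, hx, hx'⟩ := hA.isCompact.exists_isMaxOn hne hh.continuousOn
  refine ⟨x, hx, ?_⟩
  apply le_antisymm
  · exact le_csSup (hA.isCompact.image hh).bddAbove ⟨x, hx, rfl⟩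
  · apply csSup_le (hne.image _)
    rintro _ ⟨y, hy, rfl⟩
    exact hx' hy

lemma le_mx {h : Q → ℝ} (hh : Continuous h) {A : Set Q} {x : Q} (hx : x ∈ A) :
    h x ≤ mx h A :=
  le_csSup ((isCompact_univ.image hh).bddAbove.mono (image_mono (subset_univ A))) ⟨x, hx, rfl⟩

lemma continuous_mx {h : Q → ℝ} (hh : Continuous h) :
    Continuous (fun A : Subcontinua Q => mx h A.1) := by
  rw [continuous_iff_lower_upperSemicontinuous]
  constructor
  · intro A y hy
    obtain ⟨x, hx, hxm⟩ := exists_mx hh A.2.1 A.2.2.1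
    simp only at hy
    rw [← hxm] at hy
    filter_upwards [(isOpen_meet ((isOpen_lt continuous_const hh : IsOpen {x | y < h x}))).mem_nhds
      (⟨x, hx, hy⟩ : (A.1 ∩ {x | y < h x}).Nonempty)] with B hB
    obtain ⟨z, hz, hz'⟩ := hB
    exact lt_of_lt_of_le hz' (le_mx hh hz)
  · intro A y hy
    have : A.1 ⊆ {x | h x < y} := fun x hx => lt_of_le_of_lt (le_mx hh hx) hy
    filter_upwards [(isOpen_sub ((isOpen_lt hh continuous_const : IsOpen {x | h x < y}))).mem_nhds
      this] with B hB
    obtain ⟨x, hx, hxm⟩ := exists_mx hh B.2.1 B.2.2.1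
    change mx h B.1 < y
    rw [← hxm]; exact hB hx

/-- push forward of subcontinua -/
def pmap {X : Type u} [TopologicalSpace X] [T2Space X] (p : Q → X) (hp : Continuous p)
    (A : Subcontinua Q) : Subcontinua X :=
  ⟨p '' A.1, (A.2.1.isCompact.image hp).isClosed, A.2.2.image p hp.continuousOn⟩

lemma continuous_pmap {X : Type u} [TopologicalSpace X] [T2Space X] (p : Q → X)
    (hp : Continuous p) : Continuous (pmap p hp) := by
  refine continuous_generateFrom_iff.2 ?_
  rintro _ (⟨U, hU, rfl⟩ | ⟨U, hU, rfl⟩)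
  · convert isOpen_sub (hU.preimage hp) using 1
    ext A; simp [pmap]
  · convert isOpen_meet (hU.preimage hp) using 1
    ext A
    exact Set.image_inter_nonempty_iff

lemma isClosed_union_of_closed {S : Set (Subcontinua Q)} (hS : IsClosed S) :
    IsClosed {q : Q | ∃ A ∈ S, q ∈ A.1} := by
  have hcl : IsClosed {p : Q × Subcontinua Q | p.1 ∈ p.2.1} := by
    rw [← isOpen_compl_iff, isOpen_iff_mem_nhds]
    rintro ⟨q, A⟩ hq
    have hq' : q ∉ A.1 := hq
    obtain ⟨U, V, hU, hV, hUs, hVs, hUV⟩ :=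
      SeparatedNhds.of_isCompact_isCompact (isCompact_singleton (x := q))
        A.2.1.isCompact (Set.disjoint_singleton_left.2 hq')
    have : IsOpen (U ×ˢ {B : Subcontinua Q | B.1 ⊆ V}) := hU.prod (isOpen_sub hV)
    refine mem_of_superset (this.mem_nhds ⟨hUs rfl, hVs⟩) ?_
    rintro ⟨q', B⟩ ⟨h1, h2⟩ h3
    exact Set.disjoint_left.1 hUV h1 (h2 h3)
  have h2 : IsClosed ({p : Q × Subcontinua Q | p.1 ∈ p.2.1} ∩ Prod.snd ⁻¹' S) :=
    hcl.inter (hS.preimage continuous_snd)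
  have := isClosedMap_fst_of_compactSpace (X := Q) (Y := Subcontinua Q) _ h2
  convert this using 1
  ext q
  simp only [mem_ofPred_eq, mem_image, mem_inter_iff, mem_preimage, Prod.exists, exists_and_right,
    exists_eq_right]
  exact exists_congr fun A => and_comm

end hyper
end HNC

namespace HNC
open Topology Filter

section comp
variable {Q : Type u} [TopologicalSpace Q] [CompactSpace Q] [T2Space Q]

lemma isClosed_compIn {Y : Set Q} (hY : IsClosed Y) {q : Q} (hq : q ∈ Y) :
    IsClosed (connectedComponentIn Y q) := by
  rw [connectedComponentIn_eq_image hq]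
  exact hY.isClosedEmbedding_subtypeVal.isClosedMap _ isClosed_connectedComponent

lemma comp_sep {Y E : Set Q} (hY : IsClosed Y) (hE : IsClosed E) {q : Q} (hq : q ∈ Y)
    (hd : connectedComponentIn Y q ∩ E = ∅) :
    ∃ Z : Set Q, IsClosed Z ∧ IsClosed (Y \ Z) ∧ Z ⊆ Y ∧ connectedComponentIn Y q ⊆ Z ∧
      Z ∩ E = ∅ := by
  have : CompactSpace Y := isCompact_iff_compactSpace.1 hY.isCompact
  set q' : Y := ⟨q, hq⟩
  have hE' : IsCompact ((Subtype.val : Y → Q) ⁻¹' E) :=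
    (hE.preimage continuous_subtype_val).isCompact
  obtain ⟨u, hu⟩ := hE'.elim_finite_subfamily_closed
    (fun s : { s : Set Y // IsClopen s ∧ q' ∈ s } => s.1) (fun s => s.2.1.1) (by
      rw [← connectedComponent_eq_iInter_isClopen]
      rw [connectedComponentIn_eq_image hq] at hd
      rw [eq_empty_iff_forall_notMem] at hd ⊢
      rintro x ⟨h1, h2⟩
      exact hd x ⟨⟨x, h2, rfl⟩, h1⟩)
  set S : Set Y := ⋂ s ∈ u, s.1 with hS
  have hSc : IsClopen S := isClopen_biInter_finset fun s _ => s.2.1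
  refine ⟨Subtype.val '' S, hY.isClosedEmbedding_subtypeVal.isClosedMap _ hSc.1, ?_, ?_, ?_, ?_⟩
  · have : Y \ (Subtype.val '' S) = Subtype.val '' Sᶜ := by
      ext x
      constructor
      · rintro ⟨hx, hx'⟩
        exact ⟨⟨x, hx⟩, fun h => hx' ⟨_, h, rfl⟩, rfl⟩
      · rintro ⟨y, hy, rfl⟩
        refine ⟨y.2, ?_⟩
        rintro ⟨z, hz, hzy⟩
        exact hy (Subtype.ext hzy ▸ hz)
    rw [this]
    exact hY.isClosedEmbedding_subtypeVal.isClosedMap _ hSc.compl.1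
  · rintro _ ⟨x, _, rfl⟩; exact x.2
  · rw [connectedComponentIn_eq_image hq]
    refine image_mono ?_
    rw [connectedComponent_eq_iInter_isClopen]
    intro x hx
    refine mem_iInter₂.2 fun s _ => ?_
    exact mem_iInter.1 hx s
  · rw [eq_empty_iff_forall_notMem] at hu ⊢
    rintro _ ⟨⟨x, hx, rfl⟩, hxE⟩
    exact hu x ⟨hxE, hx⟩

lemma split_closed {Y E0 E1 : Set Q} (hY : IsClosed Y) (hE0 : IsClosed E0) (hE1 : IsClosed E1)
    (h : ∀ A : Subcontinua Q, A.1 ⊆ Y → (A.1 ∩ E0).Nonempty → (A.1 ∩ E1).Nonempty → False) :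
    ∃ D0 D1 : Set Q, IsClosed D0 ∧ IsClosed D1 ∧ D0 ∪ D1 = Y ∧ D0 ∩ D1 = ∅ ∧
      D0 ∩ E1 = ∅ ∧ D1 ∩ E0 = ∅ := by
  have key : ∀ q ∈ Y ∩ E0, ∃ Z : Set Q, IsClosed Z ∧ IsClosed (Y \ Z) ∧ Z ⊆ Y ∧ q ∈ Z ∧
      Z ∩ E1 = ∅ := by
    rintro q ⟨hq, hq0⟩
    obtain ⟨Z, h1, h2, h3, h4, h5⟩ := comp_sep hY hE1 hq (by
      by_contra hne
      rw [← Ne, ← nonempty_iff_ne_empty] at hne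
      exact h ⟨connectedComponentIn Y q, isClosed_compIn hY hq,
        isConnected_connectedComponentIn_iff.2 hq⟩ (connectedComponentIn_subset Y q)
        ⟨q, mem_connectedComponentIn hq, hq0⟩ hne)
    exact ⟨Z, h1, h2, h3, h4 (mem_connectedComponentIn hq), h5⟩
  choose! Z hZ using key
  obtain ⟨t, ht, htc⟩ := (hY.inter hE0).isCompact.elim_nhds_subcover (fun q => (Y \ Z q)ᶜ)
    (fun q hq => (hZ q hq).2.1.isOpen_compl.mem_nhds (fun h => h.2 (hZ q hq).2.2.2.1))
  refine ⟨⋃ q ∈ t, Z q, Y ∩ ⋂ q ∈ t, (Y \ Z q), ?_, ?_, ?_, ?_, ?_, ?_⟩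
  · exact t.finite_toSet.isClosed_biUnion fun q hq => (hZ q (ht q hq)).1
  · exact hY.inter (isClosed_biInter fun q hq => (hZ q (ht q hq)).2.1)
  · ext x
    simp only [mem_union, mem_iUnion, mem_inter_iff, mem_iInter, Set.mem_sdiff]
    constructor
    · rintro (⟨q, hq, hx⟩ | h)
      · exact (hZ q (ht q hq)).2.2.1 hx
      · exact h.1
    · intro hx
      by_cases hc : ∃ q, ∃ _ : q ∈ t, x ∈ Z q
      · exact Or.inl hc
      · push Not at hc
        exact Or.inr ⟨hx, fun q hq => ⟨hx, hc q hq⟩⟩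
  · rw [eq_empty_iff_forall_notMem]
    rintro x ⟨h1, h2⟩
    obtain ⟨q, hq, hx⟩ := mem_iUnion₂.1 h1
    exact (mem_iInter₂.1 h2.2 q hq).2 hx
  · rw [eq_empty_iff_forall_notMem]
    rintro x ⟨h1, h2⟩
    obtain ⟨q, hq, hx⟩ := mem_iUnion₂.1 h1
    exact eq_empty_iff_forall_notMem.1 (hZ q (ht q hq)).2.2.2.2 x ⟨hx, h2⟩
  · rw [eq_empty_iff_forall_notMem]
    rintro x ⟨h1, h2⟩
    obtain ⟨q, hq, hx⟩ := mem_iUnion₂.1 (htc ⟨h1.1, h2⟩)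
    exact hx (mem_iInter₂.1 h1.2 q hq)

lemma mx_mono {h : Q → ℝ} (hh : Continuous h) {A B : Set Q} (hA : A.Nonempty)
    (hAB : A ⊆ B) : mx h A ≤ mx h B := by
  apply csSup_le (hA.image _)
  rintro _ ⟨y, hy, rfl⟩
  exact le_mx hh (hAB hy)

lemma mx_le {h : Q → ℝ} {A : Set Q} (hA : A.Nonempty) {r : ℝ}
    (hr : ∀ x ∈ A, h x ≤ r) : mx h A ≤ r := by
  apply csSup_le (hA.image _)
  rintro _ ⟨y, hy, rfl⟩
  exact hr y hy

lemma mx_singleton {h : Q → ℝ} (q : Q) : mx h {q} = h q := by simp [mx]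

theorem exists_intermediate {ι : Type*} [Fintype ι] (h : ι → Q → ℝ) (hh : ∀ j, Continuous (h j))
    (c : ι → ℝ) (hc : ∀ j, 0 < c j) (B : Subcontinua Q) (q : Q) (hq : q ∈ B.1) (t : ℝ)
    (h1 : ∑ j, c j * h j q ≤ t) (h2 : t ≤ ∑ j, c j * mx (h j) B.1) :
    ∃ N : Subcontinua Q, q ∈ N.1 ∧ N.1 ⊆ B.1 ∧ ∑ j, c j * mx (h j) N.1 = t := by
  set w : Subcontinua Q → ℝ := fun A => ∑ j, c j * mx (h j) A.1 with hw
  have hwc : Continuous w := continuous_finsetSum _ fun j _ =>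
    continuous_const.mul (continuous_mx (hh j))
  set S : Set (Subcontinua Q) := {A | q ∈ A.1} ∩ {A | A.1 ⊆ B.1} ∩ {A | w A ≤ t} with hS
  have hScl : IsClosed S := by
    refine (IsClosed.inter ?_ (isClosed_sub B.2.1)).inter (isClosed_le hwc continuous_const)
    rw [← isOpen_compl_iff]
    convert isOpen_sub (isClosed_singleton (x := q)).isOpen_compl using 1
    ext A
    simp only [mem_compl_iff, mem_ofPred_eq]
    rw [Set.subset_compl_singleton_iff]
  have hSne : S.Nonempty := by
    refine ⟨⟨{q}, isClosed_singleton, isConnected_singleton⟩, ⟨rfl, ?_⟩, ?_⟩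
    · exact Set.singleton_subset_iff.2 hq
    · change ∑ j, c j * mx (h j) {q} ≤ t
      simpa only [mx_singleton] using h1
  obtain ⟨N, ⟨⟨hqN, hNB⟩, hNt⟩, hNmax⟩ := hScl.isCompact.exists_isMaxOn hSne hwc.continuousOn
  have hqN : q ∈ N.1 := hqN
  have hNB : N.1 ⊆ B.1 := hNB
  refine ⟨N, hqN, hNB, ?_⟩
  by_contra hne
  have hlt : w N < t := lt_of_le_of_ne hNt hne
  set Λ : ℝ := ∑ j, c j with hΛ
  have hΛ0 : 0 ≤ Λ := Finset.sum_nonneg fun j _ => (hc j).le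
  set σ : ℝ := (t - w N) / (Λ + 1) with hσ
  have hσ0 : 0 < σ := div_pos (by linarith) (by linarith)
  have hσΛ : w N + σ * Λ < t := by
    have : σ * (Λ + 1) = t - w N := by rw [hσ]; field_simp
    nlinarith
  have hbd : ∀ A : Set Q, A.Nonempty → (∀ x ∈ A, ∀ j, h j x ≤ mx (h j) N.1 + σ) →
      ∑ j, c j * mx (h j) A < t := by
    intro A hA hAx
    refine lt_of_le_of_lt ?_ hσΛ
    have : w N + σ * Λ = ∑ j, c j * (mx (h j) N.1 + σ) := by
      rw [hw, hΛ, Finset.mul_sum, ← Finset.sum_add_distrib]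
      exact Finset.sum_congr rfl fun j _ => by ring
    rw [this]
    exact Finset.sum_le_sum fun j _ => mul_le_mul_of_nonneg_left
      (mx_le hA fun x hx => hAx x hx j) (hc j).le
  set Y : Set Q := B.1 ∩ {x | ∀ j, h j x ≤ mx (h j) N.1 + σ} with hYdef
  have hYcl : IsClosed Y := by
    refine B.2.1.inter ?_
    rw [ofPred_forall]
    exact isClosed_iInter fun j => isClosed_le (hh j) continuous_const
  have hqY : q ∈ Y := ⟨hq, fun j => (le_mx (hh j) hqN).trans (by linarith)⟩
  have hNY : N.1 ⊆ Y := fun x hx => ⟨hNB hx, fun j => (le_mx (hh j) hx).trans (by linarith)⟩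
  set C : Subcontinua Q := ⟨connectedComponentIn Y q, isClosed_compIn hYcl hqY,
        isConnected_connectedComponentIn_iff.2 hqY⟩ with hC
  have hNC : N.1 ⊆ C.1 := N.2.2.2.subset_connectedComponentIn hqN hNY
  have hCY : C.1 ⊆ Y := connectedComponentIn_subset Y q
  have hwC : w C ≤ w N := by
    apply hNmax
    exact ⟨⟨hNC hqN, fun x hx => (hCY hx).1⟩,
      (hbd C.1 C.2.2.1 fun x hx => (hCY hx).2).le⟩
  have hCj : ∀ j, mx (h j) C.1 ≤ mx (h j) N.1 := by
    intro j
    by_contra hj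
    push Not at hj
    have : w N < w C := Finset.sum_lt_sum
      (fun i _ => mul_le_mul_of_nonneg_left (mx_mono (hh i) N.2.2.1 hNC) (hc i).le)
      ⟨j, Finset.mem_univ j, mul_lt_mul_of_pos_left hj (hc j)⟩
    linarith
  set E : Set Q := {x | ∃ j, mx (h j) N.1 + σ ≤ h j x} with hE
  have hEcl : IsClosed E := by
    rw [hE, ofPred_exists]
    exact isClosed_iUnion_of_finite fun j => isClosed_le continuous_const (hh j)
  obtain ⟨Z, hZ, hYZ, hZY, hCZ, hZE⟩ := comp_sep hYcl hEcl hqY (by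
    rw [eq_empty_iff_forall_notMem]
    rintro x ⟨hx, j, hj⟩
    have h3 : h j x ≤ mx (h j) C.1 := le_mx (hh j) hx
    linarith [hCj j])
  -- `Z` is clopen in `B`
  have hBZ : B.1 ⊆ Z := by
    by_contra hcon
    rw [Set.not_subset] at hcon
    obtain ⟨y, hyB, hyZ⟩ := hcon
    have hcl2 : IsClosed ((Y \ Z) ∪ E) := hYZ.union hEcl
    obtain ⟨x, hxB, hxZ, hx2⟩ := isPreconnected_closed_iff.1 B.2.2.2 Z ((Y \ Z) ∪ E) hZ hcl2 (by
      intro x hx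
      by_cases hxE : x ∈ E
      · exact Or.inr (Or.inr hxE)
      · have hxY : x ∈ Y := ⟨hx, fun j => by
          by_contra hj; exact hxE ⟨j, by linarith⟩⟩
        by_cases hxZ : x ∈ Z
        · exact Or.inl hxZ
        · exact Or.inr (Or.inl ⟨hxY, hxZ⟩))
      ⟨q, hq, hCZ (mem_connectedComponentIn hqY)⟩
      ⟨y, hyB, by
        by_cases hyE : y ∈ E
        · exact Or.inr hyE
        · exact Or.inl ⟨⟨hyB, fun j => by by_contra hj; exact hyE ⟨j, by linarith⟩⟩, hyZ⟩⟩
    rcases hx2 with hx2 | hx2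
    · exact hx2.2 hxZ
    · exact eq_empty_iff_forall_notMem.1 hZE x ⟨hxZ, hx2⟩
  have := hbd B.1 B.2.2.1 fun x hx => (hZY (hBZ hx)).2
  linarith

end comp
end HNC

namespace HNC
open Topology Filter

/-- crookedness of a level set with respect to `u` -/
def CrookU {Q : Type*} [TopologicalSpace Q] (Φ u : Q → ℝ) : Prop :=
  ∀ P R : Set Q, IsPreconnected P → IsPreconnected R → (∀ q ∈ P, Φ q = 0) → (∀ q ∈ R, Φ q = 0) →
    (P ∩ R).Nonempty → (∀ q ∈ P, u q ≤ 0) → (∃ a ∈ P, u a = -1) → (∀ q ∈ R, 0 ≤ u q) →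
    (∃ b ∈ R, u b = 1) → False

lemma crook_step {Q : Type*} [TopologicalSpace Q] (F : Q → ℝ) (hF : Continuous F) (u : Q → ℝ)
    (Φ : Q → ℝ)
    (hΦ : ∀ q, Φ q = 0 → |(6 * F q)^3 - 3 * (6 * F q) - 3 * u q| ≤ 1/2) : CrookU Φ u := by
  intro P R hP hR hP0 hR0 hPR huP ⟨a, haP, ha⟩ huR ⟨b, hbR, hb⟩
  obtain ⟨q, hqP, hqR⟩ := hPR
  have key1 : ∀ q ∈ P, F q ≠ -1/6 := by
    intro q hq h
    have h1 := abs_le.1 (hΦ q (hP0 q hq))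
    have h2 := huP q hq
    rw [h] at h1; norm_num at h1; linarith [h1.1, h1.2]
  have key2 : ∀ q ∈ R, F q ≠ 1/6 := by
    intro q hq h
    have h1 := abs_le.1 (hΦ q (hR0 q hq))
    have h2 := huR q hq
    rw [h] at h1; norm_num at h1; linarith [h1.1, h1.2]
  have ha' : F a < -1/6 := by
    have h1 := abs_le.1 (hΦ a (hP0 a haP))
    rw [ha] at h1
    by_contra hc
    push Not at hc
    set y := 6 * F a with hy
    have : -1 ≤ y := by linarith
    nlinarith [mul_nonneg (by linarith : 0 ≤ y + 2) (sq_nonneg (y - 1)), h1.1, h1.2]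
  have hb' : 1/6 < F b := by
    have h1 := abs_le.1 (hΦ b (hR0 b hbR))
    rw [hb] at h1
    by_contra hc
    push Not at hc
    set y := 6 * F b with hy
    have : y ≤ 1 := by linarith
    nlinarith [mul_nonneg (by linarith : 0 ≤ 2 - y) (sq_nonneg (y + 1)), h1.1, h1.2]
  have h1 : F q < -1/6 := by
    by_contra hc
    push Not at hc
    obtain ⟨z, hz, hz'⟩ := hP.intermediate_value haP hqP hF.continuousOn ⟨ha'.le, hc⟩
    exact key1 z hz hz'
  have h2 : 1/6 < F q := by
    by_contra hc
    push Not at hc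
    obtain ⟨z, hz, hz'⟩ := hR.intermediate_value hqR hbR hF.continuousOn ⟨hc, hb'.le⟩
    exact key2 z hz hz'
  linarith

lemma exists_crook {Q : Type*} [TopologicalSpace Q] (us : List (Q → ℝ)) :
    ∀ (F : Q → ℝ), Continuous F → (∀ u ∈ us, Continuous u ∧ ∀ q, |u q| ≤ 1) →
    ∃ Φ : Q → ℝ, Continuous Φ ∧ (∀ q, 1 ≤ F q → 1 ≤ Φ q) ∧ (∀ q, F q ≤ -1 → Φ q ≤ -1) ∧
      (∀ q, |Φ q| ≤ 1/2 → |F q| ≤ 1/2) ∧ ∀ u ∈ us, CrookU Φ u := by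
  induction us with
  | nil => intro F hF _; exact ⟨F, hF, fun _ h => h, fun _ h => h, fun _ h => h, by simp⟩
  | cons u us ih =>
    intro F hF hus
    obtain ⟨hu, hu1⟩ := hus u (by simp)
    obtain ⟨Φ, h1, h2, h3, h4, h5⟩ := ih (fun q => (6 * F q)^3 - 3 * (6 * F q) - 3 * u q)
      (by fun_prop) (fun v hv => hus v (by simp [hv]))
    refine ⟨Φ, h1, fun q hq => h2 q ?_, fun q hq => h3 q ?_, fun q hq => ?_, ?_⟩
    · have := abs_le.1 (hu1 q)
      have h6 : 0 ≤ F q - 1 := by linarith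
      nlinarith [mul_nonneg h6 h6, mul_nonneg (mul_nonneg h6 h6) h6, this.1, this.2]
    · have := abs_le.1 (hu1 q)
      have h6 : 0 ≤ -1 - F q := by linarith
      nlinarith [mul_nonneg h6 h6, mul_nonneg (mul_nonneg h6 h6) h6, this.1, this.2]
    · have h7 := abs_le.1 (h4 q hq)
      have := abs_le.1 (hu1 q)
      rw [abs_le]
      constructor
      · by_contra hc
        push Not at hc
        have h6 : 0 ≤ -1/2 - F q := by linarith
        nlinarith [mul_nonneg h6 h6, mul_nonneg (mul_nonneg h6 h6) h6, this.1, this.2, h7.1, h7.2]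
      · by_contra hc
        push Not at hc
        have h6 : 0 ≤ F q - 1/2 := by linarith
        nlinarith [mul_nonneg h6 h6, mul_nonneg (mul_nonneg h6 h6) h6, this.1, this.2, h7.1, h7.2]
    · intro v hv
      rcases List.mem_cons.1 hv with rfl | hv
      · exact crook_step F hF v Φ (fun q hq => h4 q (by rw [hq]; norm_num))
      · exact h5 v hv

/-- truncation to the unit interval -/
noncomputable def cl (x : ℝ) : ℝ := max 0 (min 1 x)

lemma cl_cont : Continuous cl := by unfold cl; fun_prop
lemma cl_nonneg (x : ℝ) : 0 ≤ cl x := le_max_left _ _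
lemma cl_le (x : ℝ) : cl x ≤ 1 := max_le (by norm_num) (min_le_left _ _)
lemma cl_zero {x : ℝ} (h : x ≤ 0) : cl x = 0 := by
  unfold cl; exact max_eq_left ((min_le_right _ _).trans h)
lemma cl_one {x : ℝ} (h : 1 ≤ x) : cl x = 1 := by
  unfold cl; rw [min_eq_left h]; norm_num

theorem exists_crooked {Q : Type u} [TopologicalSpace Q] [CompactSpace Q] [T2Space Q]
    {ι : Type*} [Fintype ι] (h : ι → Q → ℝ) (hh : ∀ j, Continuous (h j))
    (h0 : ∀ j q, 0 ≤ h j q) (h1 : ∀ j q, h j q ≤ 1) (ξ : ℝ) (hξ : 0 < ξ)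
    (F : Q → ℝ) (hF : Continuous F) :
    ∃ Φ : Q → ℝ, Continuous Φ ∧ (∀ q, 1 ≤ F q → 1 ≤ Φ q) ∧ (∀ q, F q ≤ -1 → Φ q ≤ -1) ∧
      (∀ q, Φ q = 0 → |F q| ≤ 1/2) ∧
      ∀ A B : Subcontinua Q, (∀ q ∈ A.1, Φ q = 0) → (∀ q ∈ B.1, Φ q = 0) →
        (A.1 ∩ B.1).Nonempty →
        (∀ j, mx (h j) A.1 ≤ mx (h j) B.1 + ξ) ∨ (∀ j, mx (h j) B.1 ≤ mx (h j) A.1 + ξ) := by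
  obtain ⟨N, hN⟩ := exists_nat_gt (2 / ξ)
  have hNpos : (0:ℝ) < N := lt_trans (by positivity) hN
  have hN2 : 2 / (N:ℝ) < ξ := by
    rw [div_lt_iff₀ hξ] at hN; rw [div_lt_iff₀ hNpos]; linarith
  let U : (ι × ι) × (Fin (N+1) × Fin (N+1)) → Q → ℝ := fun t q =>
    cl (N * h t.1.2 q - (t.2.2 : ℕ)) - cl (N * h t.1.1 q - (t.2.1 : ℕ))
  obtain ⟨Φ, g1, g2, g3, g4, g5⟩ := exists_crook (Finset.univ.toList.map U) F hF (by
    intro u hu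
    obtain ⟨t, -, rfl⟩ := List.mem_map.1 hu
    constructor
    · have := cl_cont
      have := hh t.1.1
      have := hh t.1.2
      simp only [U]; fun_prop
    · intro q
      simp only [U]
      rw [abs_le]
      constructor <;>
      linarith [cl_nonneg (N * h t.1.2 q - (t.2.2 : ℕ)), cl_nonneg (N * h t.1.1 q - (t.2.1 : ℕ)),
        cl_le (N * h t.1.2 q - (t.2.2 : ℕ)), cl_le (N * h t.1.1 q - (t.2.1 : ℕ))])
  refine ⟨Φ, g1, g2, g3, fun q hq => g4 q (by rw [hq]; norm_num), ?_⟩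
  intro A B hA hB hAB
  by_contra hcon
  push Not at hcon
  obtain ⟨⟨a, ha⟩, ⟨b, hb⟩⟩ := hcon
  -- grid levels
  have grid : ∀ (j : ι) (C : Subcontinua Q), ∃ k : Fin (N+1), N * mx (h j) C.1 ≤ (k : ℕ) ∧
      ((k : ℕ) : ℝ) + 1 ≤ N * mx (h j) C.1 + 2 := by
    intro j C
    obtain ⟨x, -, hx⟩ := exists_mx (hh j) C.2.1 C.2.2.1
    have p0 : 0 ≤ mx (h j) C.1 := hx ▸ h0 j x
    have p1 : mx (h j) C.1 ≤ 1 := hx ▸ h1 j x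
    refine ⟨⟨⌈N * mx (h j) C.1⌉₊, ?_⟩, Nat.le_ceil _, ?_⟩
    · rw [Nat.lt_succ_iff]; apply Nat.ceil_le.2; nlinarith
    · have := Nat.ceil_lt_add_one (mul_nonneg hNpos.le p0)
      simp only; linarith
  obtain ⟨k, hk1, hk2⟩ := grid a B
  obtain ⟨l, hl1, hl2⟩ := grid b A
  have hξN : 2 < N * ξ := by rw [div_lt_iff₀ hNpos] at hN2; linarith
  refine g5 (U ((a, b), (k, l))) (List.mem_map.2 ⟨_, by simp, rfl⟩) A.1 B.1 A.2.2.2 B.2.2.2 hA hB hAB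
    ?_ ?_ ?_ ?_
  · intro q hq
    have := le_mx (hh b) hq
    simp only [U]
    rw [cl_zero (x := N * h b q - (l : ℕ)) (by nlinarith)]
    linarith [cl_nonneg (N * h a q - (k : ℕ))]
  · obtain ⟨x, hx, hx'⟩ := exists_mx (hh a) A.2.1 A.2.2.1
    refine ⟨x, hx, ?_⟩
    have := le_mx (hh b) hx
    simp only [U]
    rw [cl_zero (x := N * h b x - (l : ℕ)) (by nlinarith), cl_one (by rw [hx']; nlinarith)]
    norm_num
  · intro q hq
    have := le_mx (hh a) hq
    simp only [U]
    rw [cl_zero (x := N * h a q - (k : ℕ)) (by nlinarith)]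
    linarith [cl_nonneg (N * h b q - (l : ℕ))]
  · obtain ⟨x, hx, hx'⟩ := exists_mx (hh b) B.2.1 B.2.2.1
    refine ⟨x, hx, ?_⟩
    have := le_mx (hh a) hx
    simp only [U]
    rw [cl_zero (x := N * h a x - (k : ℕ)) (by nlinarith), cl_one (by rw [hx']; nlinarith)]
    norm_num

end HNC

namespace HNC
open Topology Filter

lemma urysohn {X : Type*} [TopologicalSpace X] [CompactSpace X] [T2Space X] {A B : Set X}
    (hA : IsClosed A) (hB : IsClosed B) (h : A ∩ B = ∅) :
    ∃ f : X → ℝ, Continuous f ∧ (∀ x ∈ A, f x = 0) ∧ (∀ x ∈ B, f x = 1) ∧ (∀ x, 0 ≤ f x) ∧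
      ∀ x, f x ≤ 1 := by
  obtain ⟨f, h1, h2, h3⟩ := exists_continuous_zero_one_of_isClosed hA hB
    (Set.disjoint_iff_inter_eq_empty.2 h)
  exact ⟨f, f.continuous, h1, h2, fun x => (h3 x).1, fun x => (h3 x).2⟩

/-- functions to the unit interval -/
def UFun (X : Type u) [TopologicalSpace X] : Type u :=
  {h : X → ℝ // Continuous h ∧ (∀ x, 0 ≤ h x) ∧ ∀ x, h x ≤ 1}

lemma exists_sep {X : Type u} [TopologicalSpace X] [CompactSpace X] [T2Space X]
    (K : Set (Subcontinua X × Subcontinua X)) (hK : IsClosed K) (hd : ∀ p ∈ K, p.1 ≠ p.2) :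
    ∃ t : Finset (UFun X), ∀ p ∈ K, ∃ h ∈ t, 1/2 < |mx h.1 p.1.1 - mx h.1 p.2.1| := by
  have aux : ∀ A B : Subcontinua X, ¬ A.1 ⊆ B.1 → ∃ h : UFun X, mx h.1 A.1 = 1 ∧ mx h.1 B.1 = 0 := by
    intro A B hAB
    obtain ⟨x, hx, hxB⟩ := Set.not_subset.1 hAB
    obtain ⟨f, f1, f2, f3, f4, f5⟩ := urysohn B.2.1 (isClosed_singleton (x := x))
      (by ext y; simp; rintro h rfl; exact hxB h)
    refine ⟨⟨f, f1, f4, f5⟩, ?_, ?_⟩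
    · apply le_antisymm
      · exact mx_le A.2.2.1 (fun y _ => f5 y)
      · exact (f3 x rfl).ge.trans (le_mx f1 hx)
    · apply le_antisymm
      · exact mx_le B.2.2.1 (fun y hy => (f2 y hy).le)
      · obtain ⟨y, hy⟩ := B.2.2.1
        exact (f2 y hy).ge.trans (le_mx f1 hy)
  obtain ⟨t, ht⟩ := hK.isCompact.elim_finite_subcover
    (fun h : UFun X => {p : Subcontinua X × Subcontinua X | 1/2 < |mx h.1 p.1.1 - mx h.1 p.2.1|})
    (fun h => by
      have := continuous_mx h.2.1
      exact isOpen_lt continuous_const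
        (((this.comp continuous_fst).sub (this.comp continuous_snd)).abs))
    (fun p hp => by
      have hne : p.1.1 ≠ p.2.1 := fun h => hd p hp (Subtype.ext h)
      rw [mem_iUnion]
      by_cases h : p.1.1 ⊆ p.2.1
      · have h' : ¬ p.2.1 ⊆ p.1.1 := fun h' => hne (h.antisymm h')
        obtain ⟨f, f1, f2⟩ := aux _ _ h'
        exact ⟨f, by rw [mem_ofPred_eq, f1, f2]; norm_num⟩
      · obtain ⟨f, f1, f2⟩ := aux _ _ h
        exact ⟨f, by rw [mem_ofPred_eq, f1, f2]; norm_num⟩)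
  refine ⟨t, fun p hp => ?_⟩
  have := ht hp
  simp only [mem_iUnion] at this
  obtain ⟨h, h1, h2⟩ := this
  exact ⟨h, h1, h2⟩

lemma close_of_crook {ι : Type*} [Fintype ι] (c a b : ι → ℝ) (ε : ℝ) (hε : 0 < ε) (hε1 : ε ≤ 1)
    (hc : ∀ j, ε ≤ c j) (hs : ∑ j, c j ≤ 3) (he : ∑ j, c j * a j = ∑ j, c j * b j)
    (h : (∀ j, a j ≤ b j + ε / 10) ∨ (∀ j, b j ≤ a j + ε / 10)) (j : ι) : |a j - b j| ≤ 1/2 := by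
  have key : ∀ a b : ι → ℝ, ∑ j, c j * a j = ∑ j, c j * b j → (∀ j, a j ≤ b j + ε / 10) →
      |a j - b j| ≤ 1/2 := by
    intro a b he h
    have h1 : ∀ i, 0 ≤ c i * (b i - a i + ε / 10) := fun i =>
      mul_nonneg (hε.le.trans (hc i)) (by linarith [h i])
    have h2 := Finset.single_le_sum (fun i _ => h1 i) (Finset.mem_univ j)
    have h3 : ∑ i, c i * (b i - a i + ε / 10) = (∑ i, c i) * (ε / 10) := by
      rw [Finset.sum_mul]
      have : ∀ i, c i * (b i - a i + ε / 10) = c i * b i - c i * a i + c i * (ε/10) := fun i => by ring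
      simp only [this]
      rw [Finset.sum_add_distrib, Finset.sum_sub_distrib, he]; ring
    have h4 : ε * (b j - a j + ε / 10) ≤ 3 * (ε / 10) := by
      calc ε * (b j - a j + ε / 10) ≤ c j * (b j - a j + ε / 10) :=
            mul_le_mul_of_nonneg_right (hc j) (by linarith [h j])
        _ ≤ _ := h2
        _ ≤ _ := by rw [h3]; exact mul_le_mul_of_nonneg_right hs (by linarith)
    have h5 : b j - a j + ε / 10 ≤ 3/10 := by
      by_contra hc'
      push Not at hc'
      nlinarith
    rw [abs_le]
    constructor
    · linarith
    · linarith [h j]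
  rcases h with h | h
  · exact key a b he h
  · rw [abs_sub_comm]; exact key b a he.symm h

lemma mx_comp {Q X : Type u} (p : Q → X) (h : X → ℝ) (A : Set Q) :
    mx (fun q => h (p q)) A = mx h (p '' A) := by
  unfold mx; rw [← Set.image_comp]; rfl

end HNC

namespace HNC
open Topology Filter

theorem core {X : Type u} [TopologicalSpace X] [CompactSpace X] [T2Space X] {n : ℕ}
    (U : Fin 3 → Set X) (hU : ∀ j, IsOpen (U j))
    (f g : X → ℝ) (hf : Continuous f) (hg : Continuous g) (hg0 : ∀ x, 0 ≤ g x) (hg1 : ∀ x, g x ≤ 1)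
    (hU0 : ∀ x, x ∉ U 0 → f x = -2) (hU1 : ∀ x, x ∉ U 1 → 3/2 < f x ∨ g x = 0)
    (hU2 : ∀ x, x ∉ U 2 → 3/2 < f x ∨ g x = 1)
    (ρ : Fin n → ℝ → ℝ) (hρ : ∀ i, Continuous (ρ i)) (hρ0 : ∀ i s, 0 ≤ ρ i s)
    (hρ1 : ∀ i s, ρ i s ≤ 1) (hρd : ∀ i j s, i ≠ j → ρ i s = 0 ∨ ρ j s = 0)
    (e : Fin n → ℝ) (he1 : ∀ i, 1/5 ≤ e i) (he2 : ∀ i, e i ≤ 4/5) (hρe : ∀ i, ρ i (e i) = 1)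
    (KP KQ KR : Fin n → Set (Subcontinua X)) (cP : ∀ i, IsClosed (KP i)) (cQ : ∀ i, IsClosed (KQ i))
    (hcov : ∀ B, ∃ i, B ∈ KP i ∨ B ∈ KQ i ∨ B ∈ KR i)
    (hPQ : ∀ i B, B ∈ KP i → B ∈ KQ i → False)
    (hP : ∀ i, ∀ B ∈ KP i, ∃ x ∈ B.1, 9/10 < ρ i (g x) ∧ f x < 1/4)
    (hQ : ∀ i, ∀ B ∈ KQ i, ∃ x ∈ B.1, 9/10 < ρ i (g x) ∧ -1/4 < f x)
    (hR : ∀ i, ∀ B ∈ KR i, ∀ x ∈ B.1, ρ i (g x) < 1) :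
    ∃ W : Fin 3 → Set X, (∀ j, IsOpen (W j)) ∧ (∀ j, W j ⊆ U j) ∧ (⋃ j, W j) = univ ∧
      W 0 ∩ W 1 ∩ W 2 = ∅ := by
  classical
  -- separation
  obtain ⟨t, ht⟩ := exists_sep (⋃ i, KP i ×ˢ KQ i)
    (isClosed_iUnion_of_finite fun i => (cP i).prod (cQ i)) (by
      rintro ⟨A, B⟩ hp hAB
      obtain ⟨i, h1, h2⟩ := mem_iUnion.1 hp
      simp only at hAB h1 h2
      subst hAB
      exact hPQ i _ h1 h2)
  -- the weighted family
  set ε : ℝ := 1 / (10 * ((t.card : ℝ) + 1)) with hεd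
  have hε : 0 < ε := by positivity
  have hεm : (t.card : ℝ) * ε ≤ 1/10 := by
    rw [hεd]; rw [mul_one_div, div_le_iff₀ (by positivity)]; linarith
  have hε1 : ε ≤ 1 := by
    rw [hεd, div_le_iff₀ (by positivity)]; linarith [(Nat.cast_nonneg t.card : (0:ℝ) ≤ t.card)]
  let HX : Bool ⊕ t → X → ℝ := Sum.elim (fun b => if b then g else fun x => 1 - g x) (fun h => h.1.1)
  let c : Bool ⊕ t → ℝ := Sum.elim (fun _ => 1) (fun _ => ε)
  have HXc : ∀ j, Continuous (HX j) := by
    rintro (b | h)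
    · cases b
      · have h1g : Continuous (fun x => 1 - g x) := continuous_const.sub hg
        simpa [HX] using h1g
      · simpa [HX] using hg
    · exact h.1.2.1
  have HX0 : ∀ j x, 0 ≤ HX j x := by
    rintro (b | h) x
    · cases b
      · simpa [HX] using hg1 x
      · simpa [HX] using hg0 x
    · exact h.1.2.2.1 x
  have HX1 : ∀ j x, HX j x ≤ 1 := by
    rintro (b | h) x
    · cases b
      · simpa [HX] using hg0 x
      · simpa [HX] using hg1 x
    · exact h.1.2.2.2 x
  have hcε : ∀ j, ε ≤ c j := by
    rintro (b | h)
    · exact hε1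
    · exact le_rfl
  have hsum : ∀ a : Bool ⊕ t → ℝ, ∑ j, c j * a j =
      a (Sum.inl true) + a (Sum.inl false) + ε * ∑ h : t, a (Sum.inr h) := by
    intro a
    rw [Fintype.sum_sum_type, Fintype.sum_bool, Finset.mul_sum]
    simp [c]
  have hc3 : ∑ j, c j ≤ 3 := by
    have := hsum (fun _ => 1)
    simp only [mul_one] at this
    rw [this]; simp; linarith
  let Q := X × Cube n
  let H : Bool ⊕ t → Q → ℝ := fun j q => HX j q.1
  have Hc : ∀ j, Continuous (H j) := fun j => (HXc j).comp continuous_fst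
  -- the function F
  let F : Q → ℝ := fun q => f q.1 - ∑ i, ρ i (g q.1) * (q.2 i : ℝ)
  have hFc : Continuous F := by
    have := hρ
    simp only [F]
    refine (hf.comp continuous_fst).sub (continuous_finsetSum _ fun i _ => ?_)
    exact ((hρ i).comp (hg.comp continuous_fst)).mul
      (continuous_subtype_val.comp ((continuous_apply i).comp continuous_snd))
  have hsingle : ∀ (q : Q) i, ρ i (g q.1) ≠ 0 → F q = f q.1 - ρ i (g q.1) * (q.2 i : ℝ) := by
    intro q i hi
    simp only [F]
    rw [Finset.sum_eq_single i]
    · intro j _ hj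
      rcases hρd j i (g q.1) hj with h | h
      · rw [h, zero_mul]
      · exact absurd h hi
    · simp
  have hFf : ∀ q : Q, |F q - f q.1| ≤ 1 := by
    intro q
    by_cases h : ∃ i, ρ i (g q.1) ≠ 0
    · obtain ⟨i, hi⟩ := h
      rw [hsingle q i hi, abs_le]
      have h1 := hρ0 i (g q.1)
      have h2 := hρ1 i (g q.1)
      have h3 := (q.2 i).2.1
      have h4 := (q.2 i).2.2
      constructor <;> nlinarith
    · push Not at h
      simp [F, h]
  obtain ⟨Φ, hΦ, hΦ1, hΦ2, hΦ3, hcrook⟩ := exists_crooked H Hc (fun j q => HX0 j q.1)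
    (fun j q => HX1 j q.1) (ε/10) (by positivity) (fun q => 10 * F q) (by fun_prop)
  -- the weight
  let w : Subcontinua Q → ℝ := fun A => ∑ j, c j * mx (H j) A.1
  have hwc : Continuous w :=
    continuous_finsetSum _ fun j _ => continuous_const.mul (continuous_mx (Hc j))
  let pr : Subcontinua Q → Subcontinua X := pmap Prod.fst continuous_fst
  have hpr : Continuous pr := continuous_pmap _ _
  have hmxpr : ∀ j A, mx (H j) A.1 = mx (HX j) (pr A).1 := fun j A => mx_comp _ _ _
  have hT : IsClosed {q : Q | Φ q = 0} := isClosed_eq hΦ continuous_const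
  let S : Set (Subcontinua X) → Set (Subcontinua Q) := fun K =>
    {A | A.1 ⊆ {q | Φ q = 0}} ∩ {A | w A = 2} ∩ pr ⁻¹' K
  have hS : ∀ K, IsClosed K → IsClosed (S K) := fun K hK =>
    ((isClosed_sub hT).inter (isClosed_eq hwc continuous_const)).inter (hK.preimage hpr)
  let M : Set (Subcontinua X) → Set Q := fun K => {q | ∃ A ∈ S K, q ∈ A.1}
  have hM : ∀ K, IsClosed K → IsClosed (M K) := fun K hK => isClosed_union_of_closed (hS K hK)
  have hMd : ∀ i q, q ∈ M (KP i) → q ∈ M (KQ i) → False := by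
    rintro i q ⟨A, ⟨⟨hA1, hA2⟩, hA3⟩, hqA⟩ ⟨B, ⟨⟨hB1, hB2⟩, hB3⟩, hqB⟩
    obtain ⟨h, hht, hlt⟩ := ht (pr A, pr B) (mem_iUnion.2 ⟨i, hA3, hB3⟩)
    have h1 := hcrook A B (fun q hq => hA1 hq) (fun q hq => hB1 hq) ⟨q, hqA, hqB⟩
    have h2 := close_of_crook c (fun j => mx (H j) A.1) (fun j => mx (H j) B.1) ε hε hε1 hcε hc3
      (hA2.trans hB2.symm) h1 (Sum.inr ⟨h, hht⟩)
    simp only [hmxpr] at h2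
    exact absurd hlt (not_lt.2 h2)
  -- partitions
  have hci : ∀ i, Continuous (fun q : Q => (q.2 i : ℝ)) := fun i =>
    continuous_subtype_val.comp ((continuous_apply i).comp continuous_snd)
  have hκ : ∀ i : Fin n, ∃ κ : Q → ℝ, Continuous κ ∧
      (∀ q ∈ {q : Q | (q.2 i : ℝ) = -1} ∪ M (KP i) ∩ {q : Q | (q.2 i : ℝ) ≤ 1/2}, κ q = 0) ∧
      (∀ q ∈ {q : Q | (q.2 i : ℝ) = 1} ∪ M (KQ i) ∩ {q : Q | -1/2 ≤ (q.2 i : ℝ)}, κ q = 1) ∧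
      (∀ q, 0 ≤ κ q) ∧ ∀ q, κ q ≤ 1 := by
    intro i
    apply urysohn
    · exact (isClosed_eq (hci i) continuous_const).union
        ((hM _ (cP i)).inter (isClosed_le (hci i) continuous_const))
    · exact (isClosed_eq (hci i) continuous_const).union
        ((hM _ (cQ i)).inter (isClosed_le continuous_const (hci i)))
    · rw [Set.eq_empty_iff_forall_notMem]
      rintro q ⟨h1 | ⟨h1, h1'⟩, h2 | ⟨h2, h2'⟩⟩
      · simp only [mem_ofPred_eq] at h1 h2; linarith
      · simp only [mem_ofPred_eq] at h1 h2'; linarith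
      · simp only [mem_ofPred_eq] at h1' h2; linarith
      · exact hMd i q h1 h2
  choose κ κc κ0 κ1 _ _ using hκ
  have hDc : IsClosed ({q : Q | Φ q = 0} ∩ ⋂ i, {q | κ i q = 1/2}) :=
    hT.inter (isClosed_iInter fun i => isClosed_eq (κc i) continuous_const)
  have hgq : Continuous (fun q : Q => g q.1) := hg.comp continuous_fst
  have hclaim : ∀ A : Subcontinua Q, A.1 ⊆ {q : Q | Φ q = 0} ∩ ⋂ i, {q | κ i q = 1/2} →
      (A.1 ∩ {q : Q | g q.1 = 0}).Nonempty → (A.1 ∩ {q : Q | g q.1 = 1}).Nonempty → False := by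
    rintro A hA ⟨a, haA, ha⟩ ⟨b, hbA, hb⟩
    simp only [mem_ofPred_eq] at ha hb
    have hmxnn : ∀ (B : Subcontinua Q) j, 0 ≤ mx (H j) B.1 := fun B j => by
      obtain ⟨x, -, hx⟩ := exists_mx (Hc j) B.2.1 B.2.2.1
      rw [← hx]; exact HX0 j _
    have hmxl : ∀ (B : Subcontinua Q) j, mx (H j) B.1 ≤ 1 := fun B j =>
      mx_le B.2.2.1 fun x _ => HX1 j _
    obtain ⟨N, -, hNA, hN⟩ := exists_intermediate H Hc c (fun j => hε.trans_le (hcε j)) A a haA 2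
      (by
        rw [hsum]
        have h1 : ∑ h : t, H (Sum.inr h) a ≤ ∑ h : t, 1 :=
          Finset.sum_le_sum fun h _ => HX1 _ _
        simp only [Finset.sum_const, Finset.card_univ, Fintype.card_coe, nsmul_eq_mul, mul_one] at h1
        have h2 : H (Sum.inl true) a + H (Sum.inl false) a = 1 := by simp [H, HX]
        nlinarith)
      (by
        rw [hsum]
        have h1 : 0 ≤ ∑ h : t, mx (H (Sum.inr h)) A.1 := Finset.sum_nonneg fun h _ => hmxnn A _
        have h2 := le_mx (Hc (Sum.inl true)) hbA
        have h3 := le_mx (Hc (Sum.inl false)) haA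
        have h4 : H (Sum.inl true) b = 1 := by simp [H, HX, hb]
        have h5 : H (Sum.inl false) a = 1 := by simp [H, HX, ha]
        have := mul_nonneg hε.le h1
        linarith)
    -- the range of g on N
    have hrange : ∀ i, ∃ q ∈ N.1, g q.1 = e i := by
      intro i
      have h0 := hN
      rw [hsum] at h0
      have h1 : ∑ h : t, mx (H (Sum.inr h)) N.1 ≤ ∑ h : t, 1 :=
        Finset.sum_le_sum fun h _ => hmxl N _
      simp only [Finset.sum_const, Finset.card_univ, Fintype.card_coe, nsmul_eq_mul, mul_one] at h1
      have h2 := hmxl N (Sum.inl true)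
      have h3 := hmxl N (Sum.inl false)
      have h1' : ε * ∑ h : t, mx (H (Sum.inr h)) N.1 ≤ 1/10 := by nlinarith
      obtain ⟨x, hx, hx'⟩ := exists_mx (Hc (Sum.inl true)) N.2.1 N.2.2.1
      obtain ⟨y, hy, hy'⟩ := exists_mx (Hc (Sum.inl false)) N.2.1 N.2.2.1
      have h4 : H (Sum.inl true) x = g x.1 := by simp [H, HX]
      have h5 : H (Sum.inl false) y = 1 - g y.1 := by simp [H, HX]
      obtain ⟨z, hz, hz'⟩ := N.2.2.2.intermediate_value hy hx hgq.continuousOn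
        (⟨by linarith [he1 i], by linarith [he2 i]⟩ : e i ∈ Icc (g y.1) (g x.1))
      exact ⟨z, hz, hz'⟩
    have hNT : N.1 ⊆ {q | Φ q = 0} := fun q hq => (hA (hNA hq)).1
    have hNκ : ∀ q ∈ N.1, ∀ i, κ i q = 1/2 := fun q hq i => mem_iInter.1 (hA (hNA hq)).2 i
    obtain ⟨i, hi | hi | hi⟩ := hcov (pr N)
    · obtain ⟨_, ⟨q, hq, rfl⟩, h1, h2⟩ := hP i _ hi
      have hqM : q ∈ M (KP i) := ⟨N, ⟨⟨hNT, hN⟩, hi⟩, hq⟩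
      have h3 : 1/2 < (q.2 i : ℝ) := by
        by_contra hc'
        push Not at hc'
        have := κ0 i q (Or.inr ⟨hqM, hc'⟩)
        rw [hNκ q hq i] at this; norm_num at this
      have h4 := abs_le.1 (hΦ3 q (hNT hq))
      rw [hsingle q i (by linarith)] at h4
      nlinarith [h4.1, h4.2]
    · obtain ⟨_, ⟨q, hq, rfl⟩, h1, h2⟩ := hQ i _ hi
      have hqM : q ∈ M (KQ i) := ⟨N, ⟨⟨hNT, hN⟩, hi⟩, hq⟩
      have h3 : (q.2 i : ℝ) < -1/2 := by
        by_contra hc'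
        push Not at hc'
        have := κ1 i q (Or.inr ⟨hqM, hc'⟩)
        rw [hNκ q hq i] at this; norm_num at this
      have h4 := abs_le.1 (hΦ3 q (hNT hq))
      rw [hsingle q i (by linarith)] at h4
      nlinarith [h4.1, h4.2]
    · obtain ⟨q, hq, hq'⟩ := hrange i
      have := hR i _ hi q.1 ⟨q, hq, rfl⟩
      rw [hq', hρe] at this
      exact lt_irrefl _ this
  have hE0 : IsClosed {q : Q | g q.1 = 0} := isClosed_eq hgq continuous_const
  have hE1 : IsClosed {q : Q | g q.1 = 1} := isClosed_eq hgq continuous_const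
  obtain ⟨D0, D1, d0, d1, dU, dI, dE1, dE0⟩ := split_closed hDc hE0 hE1 hclaim
  obtain ⟨γ, γc, γ0, γ1, _, _⟩ := urysohn (d0.union hE0) (d1.union hE1) (by
    rw [Set.eq_empty_iff_forall_notMem]
    rintro q ⟨h1 | h1, h2 | h2⟩
    · exact (dI ▸ (⟨h1, h2⟩ : q ∈ D0 ∩ D1) : q ∈ (∅ : Set Q))
    · exact (dE1 ▸ (⟨h1, h2⟩ : q ∈ D0 ∩ _) : q ∈ (∅ : Set Q))
    · exact (dE0 ▸ (⟨h2, h1⟩ : q ∈ D1 ∩ _) : q ∈ (∅ : Set Q))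
    · simp only [mem_ofPred_eq] at h1 h2; linarith)
  refine covers_of_no_common_zero U hU Φ (fun q => γ q - 1/2) (fun i q => κ i q - 1/2) hΦ
    (γc.sub continuous_const) (fun i => (κc i).sub continuous_const) ?_ ?_ ?_ ?_ ?_ ?_
  · intro q
    by_contra hcon
    push Not at hcon
    obtain ⟨h1, h2, h3⟩ := hcon
    have hq : q ∈ D0 ∪ D1 := by
      rw [dU]
      exact ⟨h1, mem_iInter.2 fun i => by have := h3 i; simp only [mem_ofPred_eq]; linarith⟩
    rcases hq with hq | hq
    · have := γ0 q (Or.inl hq); linarith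
    · have := γ1 q (Or.inl hq); linarith
  · intro q hq
    have h1 := abs_le.1 (hFf q)
    rw [hU0 _ hq] at h1
    linarith [hΦ2 q (by linarith [h1.2])]
  · intro q hq
    rcases hU1 _ hq with h | h
    · left
      have h1 := abs_le.1 (hFf q)
      linarith [hΦ1 q (by linarith [h1.1])]
    · right
      have := γ0 q (Or.inr h); linarith
  · intro q hq
    rcases hU2 _ hq with h | h
    · left
      have h1 := abs_le.1 (hFf q)
      linarith [hΦ1 q (by linarith [h1.1])]
    · right
      have := γ1 q (Or.inr h); linarith
  · intro q j hq
    have := κ0 j q (Or.inl (by simp only [mem_ofPred_eq]; rw [hq]; rfl)); linarith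
  · intro q j hq
    have := κ1 j q (Or.inl (by simp only [mem_ofPred_eq]; rw [hq]; rfl)); linarith

end HNC

namespace HNC
open Topology Filter

/-- centres of the bumps -/
noncomputable def ee (i : ℕ) : ℝ := 1/5 + (3/5) * (1 / ((i:ℝ) + 1))

/-- bumps with disjoint supports -/
noncomputable def rr (i : ℕ) (s : ℝ) : ℝ := cl (1 - 4 * (((i:ℝ) + 1) * ((i:ℝ) + 2)) * |s - ee i|)

lemma rr_cont (i : ℕ) : Continuous (rr i) := by
  unfold rr; exact cl_cont.comp (by fun_prop)

lemma rr_ee (i : ℕ) : rr i (ee i) = 1 := by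
  unfold rr; apply cl_one; simp

lemma ee_ge (i : ℕ) : 1/5 ≤ ee i := by
  unfold ee; have : (0:ℝ) ≤ 1 / ((i:ℝ)+1) := by positivity
  linarith

lemma ee_le (i : ℕ) : ee i ≤ 4/5 := by
  unfold ee
  have : 1 / ((i:ℝ)+1) ≤ 1 := by
    rw [div_le_one (by positivity)]; linarith [(Nat.cast_nonneg i : (0:ℝ) ≤ i)]
  linarith

lemma rr_disj_lt {i j : ℕ} (hij : i < j) (s : ℝ) : rr i s = 0 ∨ rr j s = 0 := by
  by_contra hcon
  push Not at hcon
  obtain ⟨h1, h2⟩ := hcon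
  have a1 : 4 * (((i:ℝ) + 1) * ((i:ℝ) + 2)) * |s - ee i| < 1 := by
    by_contra h; exact h1 (cl_zero (by linarith))
  have a2 : 4 * (((j:ℝ) + 1) * ((j:ℝ) + 2)) * |s - ee j| < 1 := by
    by_contra h; exact h2 (cl_zero (by linarith))
  have hij' : (i:ℝ) + 1 ≤ j := by exact_mod_cast hij
  have hi : (0:ℝ) ≤ i := Nat.cast_nonneg i
  have hLpos : 0 < ((i:ℝ) + 1) * ((i:ℝ) + 2) := by positivity
  have a3 : 4 * (((i:ℝ) + 1) * ((i:ℝ) + 2)) * |s - ee j| < 1 := by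
    refine lt_of_le_of_lt ?_ a2
    apply mul_le_mul_of_nonneg_right _ (abs_nonneg _)
    nlinarith
  have a4 : ee i - ee j ≤ |s - ee i| + |s - ee j| := by
    linarith [neg_abs_le (s - ee i), le_abs_self (s - ee j)]
  have a5 : 3/5 ≤ ((i:ℝ) + 1) * ((i:ℝ) + 2) * (ee i - ee j) := by
    have h5 : 1 / ((j:ℝ)+1) ≤ 1 / ((i:ℝ)+2) := one_div_le_one_div_of_le (by positivity) (by linarith)
    have h6 : ((i:ℝ) + 1) * ((i:ℝ) + 2) * (1 / ((i:ℝ)+1) - 1 / ((i:ℝ)+2)) = 1 := by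
      field_simp; ring
    unfold ee
    nlinarith
  nlinarith

lemma rr_disj {i j : ℕ} (hij : i ≠ j) (s : ℝ) : rr i s = 0 ∨ rr j s = 0 := by
  rcases lt_or_gt_of_ne hij with h | h
  · exact rr_disj_lt h s
  · exact (rr_disj_lt h s).symm

theorem not_cSpace_aux (X : Type u) [TopologicalSpace X] [CompactSpace X] [T2Space X]
    (h : 2 ≤ covDim X) (hC : IsCSpace (Subcontinua X)) : False := by
  classical
  obtain ⟨U, hU, hUc, hUn⟩ := exists_three_cover X h
  apply hUn
  have hUx : ∀ x, x ∈ U 0 ∨ x ∈ U 1 ∨ x ∈ U 2 := by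
    intro x
    have : x ∈ ⋃ j, U j := hUc ▸ mem_univ x
    obtain ⟨j, hj⟩ := mem_iUnion.1 this
    fin_cases j
    · exact Or.inl hj
    · exact Or.inr (Or.inl hj)
    · exact Or.inr (Or.inr hj)
  obtain ⟨f0, f1, f2, f3, f4, f5⟩ := urysohn (A := (U 0)ᶜ) (B := (U 1)ᶜ ∩ (U 2)ᶜ)
    (hU 0).isClosed_compl ((hU 1).isClosed_compl.inter (hU 2).isClosed_compl) (by
      rw [Set.eq_empty_iff_forall_notMem]
      rintro x ⟨h0, h1, h2⟩
      rcases hUx x with h | h | h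
      · exact h0 h
      · exact h1 h
      · exact h2 h)
  set f : X → ℝ := fun x => 4 * f0 x - 2 with hfd
  have hf : Continuous f := by fun_prop
  have hfc : IsClosed {x | f x ≤ 3/2} := isClosed_le hf continuous_const
  obtain ⟨g, g1, g2, g3, g4, g5⟩ := urysohn (A := (U 1)ᶜ ∩ {x | f x ≤ 3/2})
    (B := (U 2)ᶜ ∩ {x | f x ≤ 3/2}) ((hU 1).isClosed_compl.inter hfc)
    ((hU 2).isClosed_compl.inter hfc) (by
      rw [Set.eq_empty_iff_forall_notMem]
      rintro x ⟨⟨h0, h1⟩, h2, h3⟩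
      have := f3 x ⟨h0, h2⟩
      simp only [mem_ofPred_eq, hfd, this] at h1
      norm_num at h1)
  -- covers
  let oP : ℕ → Set X := fun i => {x | 9/10 < rr i (g x)} ∩ {x | f x < 1/4}
  let oQ : ℕ → Set X := fun i => {x | 9/10 < rr i (g x)} ∩ {x | -1/4 < f x}
  let oR : ℕ → Set X := fun i => {x | rr i (g x) < 1}
  have hrg : ∀ i, Continuous (fun x => rr i (g x)) := fun i => (rr_cont i).comp g1
  have oPo : ∀ i, IsOpen (oP i) := fun i =>
    (isOpen_lt continuous_const (hrg i)).inter (isOpen_lt hf continuous_const)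
  have oQo : ∀ i, IsOpen (oQ i) := fun i =>
    (isOpen_lt continuous_const (hrg i)).inter (isOpen_lt continuous_const hf)
  have oRo : ∀ i, IsOpen (oR i) := fun i => isOpen_lt (hrg i) continuous_const
  let cP : ℕ → Set (Subcontinua X) := fun i => {B | (B.1 ∩ oP i).Nonempty}
  let cQ : ℕ → Set (Subcontinua X) := fun i => {B | (B.1 ∩ oQ i).Nonempty}
  let cR : ℕ → Set (Subcontinua X) := fun i => {B | B.1 ⊆ oR i}
  obtain ⟨V, hV, hVc⟩ := hC (fun i => {cP i, cQ i, cR i}) (by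
    intro i
    constructor
    · rintro s (rfl | rfl | rfl)
      · exact isOpen_meet (oPo i)
      · exact isOpen_meet (oQo i)
      · exact isOpen_sub (oRo i)
    · rw [Set.eq_univ_iff_forall]
      intro B
      by_cases hB : B.1 ⊆ oR i
      · exact ⟨cR i, by simp, hB⟩
      · obtain ⟨x, hx, hx'⟩ := Set.not_subset.1 hB
        have hx1 : 1 ≤ rr i (g x) := not_lt.1 hx'
        rcases lt_or_ge (f x) (1/4) with h | h
        · exact ⟨cP i, by simp, ⟨x, hx, by simp only [mem_ofPred_eq]; linarith, h⟩⟩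
        · exact ⟨cQ i, by simp, ⟨x, hx, by simp only [mem_ofPred_eq]; linarith,
            by simp only [mem_ofPred_eq]; linarith⟩⟩)
  -- three groups
  let VV : ℕ → Fin 3 → Set (Set (Subcontinua X)) := fun i =>
    ![{v ∈ V i | v ⊆ cP i}, {v ∈ V i | ¬ v ⊆ cP i ∧ v ⊆ cQ i}, {v ∈ V i | ¬ v ⊆ cP i ∧ ¬ v ⊆ cQ i}]
  have hVVsub : ∀ i k, VV i k ⊆ V i := by
    intro i k v hv
    fin_cases k <;> exact hv.1
  obtain ⟨t, htc⟩ := isCompact_univ.elim_finite_subcover (fun i => ⋃₀ V i)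
    (fun i => isOpen_sUnion (hV i).1) hVc.ge
  obtain ⟨n, hn⟩ : ∃ n, ∀ i ∈ t, i < n := ⟨t.sup id + 1, fun i hi =>
    Nat.lt_succ_of_le (Finset.le_sup (f := id) hi)⟩
  obtain ⟨K, hKc, hKcl, hKs⟩ := exists_iUnion_eq_closed_subset
    (u := fun p : Fin n × Fin 3 => ⋃₀ VV p.1 p.2)
    (fun p => isOpen_sUnion fun v hv => (hV p.1).1 v (hVVsub _ _ hv))
    (fun x => Set.toFinite _) (by
      rw [Set.eq_univ_iff_forall]
      intro B
      have := htc (mem_univ B)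
      simp only [mem_iUnion] at this
      obtain ⟨i, hi, v, hv, hB⟩ := this
      rw [mem_iUnion]
      by_cases h1 : v ⊆ cP i
      · exact ⟨(⟨i, hn i hi⟩, 0), v, ⟨hv, h1⟩, hB⟩
      · by_cases h2 : v ⊆ cQ i
        · exact ⟨(⟨i, hn i hi⟩, 1), v, ⟨hv, h1, h2⟩, hB⟩
        · exact ⟨(⟨i, hn i hi⟩, 2), v, ⟨hv, h1, h2⟩, hB⟩)
  refine core U hU f g hf g1 g4 g5 ?_ ?_ ?_ (fun i : Fin n => rr i) (fun i => rr_cont i)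
    (fun i s => cl_nonneg _) (fun i s => cl_le _)
    (fun i j s hij => rr_disj (fun h => hij (Fin.ext h)) s) (fun i => ee i) (fun i => ee_ge i)
    (fun i => ee_le i) (fun i => rr_ee i) (fun i => K (i, 0)) (fun i => K (i, 1))
    (fun i => K (i, 2)) (fun i => hKcl _) (fun i => hKcl _) ?_ ?_ ?_ ?_ ?_
  · intro x hx
    have := f2 x hx
    simp only [hfd, this]; norm_num
  · intro x hx
    by_contra hc
    push Not at hc
    exact hc.2 (g2 x ⟨hx, hc.1⟩)
  · intro x hx
    by_contra hc
    push Not at hc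
    exact hc.2 (g3 x ⟨hx, hc.1⟩)
  · intro B
    have : B ∈ ⋃ p, K p := hKc ▸ mem_univ B
    obtain ⟨⟨i, k⟩, hk⟩ := mem_iUnion.1 this
    refine ⟨i, ?_⟩
    fin_cases k
    · exact Or.inl hk
    · exact Or.inr (Or.inl hk)
    · exact Or.inr (Or.inr hk)
  · intro i B h0 h1
    obtain ⟨v, ⟨hv, hv'⟩, hBv⟩ := hKs _ h0
    obtain ⟨w, ⟨hw, hw', -⟩, hBw⟩ := hKs _ h1
    have hne : v ≠ w := fun h => hw' (h ▸ hv')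
    exact Set.disjoint_left.1 ((hV i).2.1 hv hw hne) hBv hBw
  · intro i B hB
    obtain ⟨v, ⟨hv, hv'⟩, hBv⟩ := hKs _ hB
    obtain ⟨x, hx, hx1, hx2⟩ := hv' hBv
    exact ⟨x, hx, hx1, hx2⟩
  · intro i B hB
    obtain ⟨v, ⟨hv, -, hv'⟩, hBv⟩ := hKs _ hB
    obtain ⟨x, hx, hx1, hx2⟩ := hv' hBv
    exact ⟨x, hx, hx1, hx2⟩
  · intro i B hB x hx
    obtain ⟨v, ⟨hv, hv1, hv2⟩, hBv⟩ := hKs _ hB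
    obtain ⟨u, hu, hvu⟩ := (hV i).2.2 v hv
    rcases hu with rfl | rfl | rfl
    · exact absurd hvu hv1
    · exact absurd hvu hv2
    · exact hvu hBv hx

end HNC

/-- If `X` is a Hausdorff continuum of covering dimension at least `2`, then
the hyperspace `C(X)` of subcontinua of `X` is not a C-space. -/
theorem hyperspace_not_cSpace_of_two_le_covDim (X : Type u) [TopologicalSpace X]
    [CompactSpace X] [T2Space X] [ConnectedSpace X] (h : 2 ≤ covDim X) :
    ¬ IsCSpace (Subcontinua X) := by
  exact fun hC => HNC.not_cSpace_aux X h hC
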